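/- Let K be an imaginary quadratic field other than ℚ(√−1) and ℚ(√−3), with discriminant d_K, ring of integers O_K, and θ_K = (d_K + √d_K)/2 ∈ ℍ. Let N ≥ 2 be an integer such that the ideal N·O_K of O_K is not a power of a prime ideal, and let u be an integer coprime to N. Then the Siegel–Ramachandra value g_{[0, u/N]}(θ_K)^{12N} is an algebraic integer whose multiplicative inverse is also an algebraic integer; that is, it is a unit of the ring of all algebraic integers. -/

import Mathlib

/-! The value `g_{[0,u/N]}(θ_K)^{12N}` and its inverse are algebraic integers because suitable
modular functions have `q`-expansions with algebraic integer coefficients at every cusp.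

*Integrality from expansions.* Let `jj` be a generator of the ring of level one modular functions
that are holomorphic on the upper half-plane, with expansion `q⁻¹ + …` having integral coefficients;
it differs from `j` by a constant. A level one function that is holomorphic on the upper half-plane
and has algebraic integer coefficients is a polynomial in `jj` over the ring of algebraic integers
(`exists_poly_jj`). Hence, if a function has a finite orbit under the modular group and each member
of the orbit has an integral expansion, it is a root of a monic polynomial over that ring in `jj`, so
its values are integral wherever `jj` is integral (`Fam.integral`).

*Singular moduli.* If `A` is an integral matrix whose determinant is not a square, the product of
`jj - jj ∘ Aγ` over cosets is such a level one function, and its leading coefficient is a unit. At a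
fixed point of `A` it vanishes, so `jj` is integral there (`jj_integral`). This applies to `θ_K`, with
`A` the multiplication by an element `k + θ` whose norm is not a square (`jj_cm`).

*The value is integral.* Write `G r s` for `g_{[r,s]}^{12}`. The functions `(G r s)^N`, with
`r, s ∈ N⁻¹ℤ`, are permuted by the modular group, and the product formula gives their integral
expansions (`G_integral`). The transformation under `τ ↦ -1/τ` is proved by showing that the
quotient of the two sides is an entire elliptic function, with value `1` at the origin since `Δ` has
weight twelve.

*The inverse is integral.* For `B, C` integral matrices, the function
`W = (det(B)¹² Δ|_{BC} / Δ|_C / G r s)^N` again has a finite orbit. When `r` is not an integer, `G r s`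
has a unit as leading coefficient. When `r = 0` its leading coefficient is `(1 - ζ)¹²` up to a unit,
where `ζ = e(s)`, and this is absorbed: the quotient of discriminants contains a factor `k¹²`, and
`1 - ζ` divides `k` as soon as `ζᵃ` is a nontrivial `k`-th root of unity (`root_dvd`). Evaluating at
`θ = θ_K`, with `C` and `B` the multiplications by conjugates of `α, β ∈ O_K`, gives: `β^{12N} / g`
is integral whenever `uα/N ∉ O_K` and `uαβ/N ∈ O_K`, where `g` is the value in question (`unit_div`).

*Coprimality.* Since `N O_K` is not a prime power, it is a product of two coprime proper ideals, and
their powers to the class number are generated by coprime `α` and `β`. Both `α^{12N} / g` and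
`β^{12N} / g` are integral, and `α^{12N}` and `β^{12N}` generate the unit ideal, so `1 / g` is
integral. -/

open scoped Real

/-- The point `a ω₁ + b ω₂` of the lattice spanned by `ω₁, ω₂`. -/
noncomputable def latticePt (ω₁ ω₂ : ℂ) (p : ℤ × ℤ) : ℂ := p.1 * ω₁ + p.2 * ω₂

/-- The Weierstrass ℘-function relative to the lattice `ℤω₁ + ℤω₂`:
`℘(z;Λ) = 1/z² + Σ_{ω ∈ Λ∖{0}} (1/(z−ω)² − 1/ω²)`. -/
noncomputable def wp (ω₁ ω₂ z : ℂ) : ℂ :=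
  1 / z ^ 2 + ∑' p : {p : ℤ × ℤ // p ≠ 0},
    (1 / (z - latticePt ω₁ ω₂ p.1) ^ 2 - 1 / latticePt ω₁ ω₂ p.1 ^ 2)

/-- `℘_{[r,s]}(τ) = ℘(rτ + s; [τ,1])`. -/
noncomputable def wprs (r s : ℚ) (τ : ℂ) : ℂ := wp τ 1 ((r : ℂ) * τ + (s : ℂ))

/-- `q^x := e^{2πixτ}`. -/
noncomputable def qpow (τ : ℂ) (x : ℝ) : ℂ := Complex.exp (2 * (π : ℂ) * Complex.I * (x : ℂ) * τ)

/-- The Siegel function `g_{[r,s]}(τ)`. -/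
noncomputable def siegel (r s : ℚ) (τ : ℂ) : ℂ :=
  -qpow τ ((1/2) * ((r : ℝ) ^ 2 - (r : ℝ) + 1/6)) *
    Complex.exp ((π : ℂ) * Complex.I * (s : ℂ) * ((r : ℂ) - 1)) *
    (1 - qpow τ (r : ℝ) * Complex.exp (2 * (π : ℂ) * Complex.I * (s : ℂ))) *
    ∏' n : ℕ, ((1 - qpow τ ((n + 1 : ℝ) + (r : ℝ)) * Complex.exp (2 * (π : ℂ) * Complex.I * (s : ℂ))) *
      (1 - qpow τ ((n + 1 : ℝ) - (r : ℝ)) * Complex.exp (-(2 * (π : ℂ) * Complex.I * (s : ℂ)))))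

/-- The Dedekind eta function with the paper's normalization
`η(τ) = √(2π) e^{πi/4} q^{1/24} ∏_{n≥1} (1 − qⁿ)`. -/
noncomputable def eta (τ : ℂ) : ℂ :=
  (Real.sqrt (2 * π) : ℂ) * Complex.exp ((π : ℂ) * Complex.I / 4) * qpow τ (1/24) *
    ∏' n : ℕ, (1 - qpow τ (n + 1 : ℝ))

/-- `g₂(τ) = 60 Σ_{ω ∈ [τ,1]∖{0}} ω⁻⁴`. -/
noncomputable def g2 (τ : ℂ) : ℂ := 60 * ∑' p : {p : ℤ × ℤ // p ≠ 0}, 1 / latticePt τ 1 p.1 ^ 4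

/-- `g₃(τ) = 140 Σ_{ω ∈ [τ,1]∖{0}} ω⁻⁶`. -/
noncomputable def g3 (τ : ℂ) : ℂ := 140 * ∑' p : {p : ℤ × ℤ // p ≠ 0}, 1 / latticePt τ 1 p.1 ^ 6

/-- The elliptic modular function `j(τ) = 1728 g₂(τ)³ / (g₂(τ)³ − 27 g₃(τ)²)`. -/
noncomputable def jfun (τ : ℂ) : ℂ := 1728 * g2 τ ^ 3 / (g2 τ ^ 3 - 27 * g3 τ ^ 2)

/-- The Weierstrass unit `h_{m,n}(τ)`. -/
noncomputable def hweier (m n : ℕ) (τ : ℂ) : ℂ :=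
  (wprs 0 (1 / (m * n : ℚ)) τ - wprs (1 / (m : ℚ)) 0 τ) /
    (wprs 0 (1 / (m : ℚ)) τ - wprs (1 / (m : ℚ)) 0 τ)

namespace SR

open Filter Topology Asymptotics
open scoped Real

/-! ### Infinite products -/

/-- The infinite product `(w; q)_∞ = ∏_{n ≥ 0} (1 - qⁿ w)`. -/
noncomputable def poch (q w : ℂ) : ℂ := ∏' n : ℕ, (1 - q ^ n * w)

lemma poch_summable {q : ℂ} (hq : ‖q‖ < 1) (w : ℂ) : Summable fun n : ℕ => ‖-(q ^ n * w)‖ := by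
  simp only [norm_neg, norm_mul, norm_pow]
  exact (summable_geometric_of_lt_one (norm_nonneg _) hq).mul_right _

lemma poch_multipliable {q : ℂ} (hq : ‖q‖ < 1) (w : ℂ) :
    Multipliable fun n : ℕ => 1 - q ^ n * w := by
  simpa [sub_eq_add_neg] using multipliable_one_add_of_summable (poch_summable hq w)

/-- Near `w = 0` the product is close to `1`, uniformly for `q` in a smaller disc. -/
lemma poch_bound {q : ℂ} (hq : ‖q‖ < 1) (w : ℂ) :
    ‖poch q w - 1‖ ≤ Real.exp (‖w‖ / (1 - ‖q‖)) - 1 := by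
  have h1 : Tendsto (fun m : ℕ => ‖∏ n ∈ Finset.range m, (1 + -(q ^ n * w)) - 1‖) atTop
      (𝓝 ‖poch q w - 1‖) := by
    have := (poch_multipliable hq w).hasProd.tendsto_prod_nat
    simp only [sub_eq_add_neg] at this
    simpa [poch, sub_eq_add_neg] using (this.sub_const 1).norm
  refine le_of_tendsto h1 (Eventually.of_forall fun m => ?_)
  refine (Finset.norm_prod_one_add_sub_one_le _ _).trans ?_
  gcongr
  simp only [norm_neg, norm_mul, norm_pow, ← Finset.sum_mul]
  rw [div_eq_mul_inv, mul_comm, ← tsum_geometric_of_lt_one (norm_nonneg _) hq]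
  gcongr
  exact (summable_geometric_of_lt_one (norm_nonneg _) hq).sum_le_tsum _ (fun _ _ => by positivity)

lemma poch_ne_zero {q : ℂ} (hq : ‖q‖ < 1) {w : ℂ} (h : ∀ n : ℕ, q ^ n * w ≠ 1) :
    poch q w ≠ 0 := by
  have := tprod_one_add_ne_zero_of_summable (f := fun n : ℕ => -(q ^ n * w))
    (fun i hi => h i (by linear_combination -hi)) (poch_summable hq w)
  simpa [poch, sub_eq_add_neg] using this

lemma poch_succ {q : ℂ} (hq : ‖q‖ < 1) (w : ℂ) : poch q w = (1 - w) * poch q (q * w) := by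
  have h1 := (poch_multipliable hq (q * w)).hasProd
  have h2 : HasProd (fun n : ℕ => 1 - q ^ n * w) ((1 - w) * poch q (q * w)) := by
    have h3 : (fun n : ℕ => 1 - q ^ n * (q * w)) = fun n : ℕ => 1 - q ^ (n + 1) * w := by
      ext n; ring
    rw [h3] at h1
    have := h1.zero_mul (f := fun n : ℕ => 1 - q ^ n * w)
    simpa [poch, h3] using this
  exact h2.tprod_eq

lemma poch_split {q : ℂ} (hq : ‖q‖ < 1) (w : ℂ) (m : ℕ) :
    poch q w = (∏ n ∈ Finset.range m, (1 - q ^ n * w)) * poch q (q ^ m * w) := by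
  induction m with
  | zero => simp
  | succ m ih =>
    rw [ih, poch_succ hq (q ^ m * w), Finset.prod_range_succ]
    ring_nf

lemma poch_differentiableOn {U : Set ℂ} (hU : IsOpen U) {q w : ℂ → ℂ}
    (hq : DifferentiableOn ℂ q U) (hw : DifferentiableOn ℂ w U) (h1 : ∀ t ∈ U, ‖q t‖ < 1) :
    DifferentiableOn ℂ (fun t => poch (q t) (w t)) U := by
  have key : HasProdLocallyUniformlyOn (fun (n : ℕ) t => 1 + -(q t ^ n * w t))
      (fun t => ∏' n : ℕ, (1 + -(q t ^ n * w t))) U := by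
    apply hasProdLocallyUniformlyOn_of_forall_compact hU
    intro K hK hcK
    rcases K.eq_empty_or_nonempty with hN | hN
    · subst hN
      rw [hasProdUniformlyOn_iff_tendstoUniformlyOn]
      exact tendstoUniformlyOn_empty
    have hqK := hq.continuousOn.mono hK
    have hwK := hw.continuousOn.mono hK
    obtain ⟨a, haK, ha⟩ := hcK.exists_isMaxOn hN hqK.norm
    obtain ⟨b, -, hb⟩ := hcK.exists_isMaxOn hN hwK.norm
    refine ((summable_geometric_of_lt_one (norm_nonneg _) (h1 a (hK haK))).mul_right
      ‖w b‖).hasProdUniformlyOn_nat_one_add hcK (.of_forall fun n x hx => ?_) (fun n => by fun_prop)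
    simp only [norm_neg, norm_mul, norm_pow]
    have := ha hx
    have := hb hx
    simp only [Set.mem_ofPred_eq] at *
    gcongr
  have := key.differentiableOn (.of_forall fun s => ?_) hU
  · simpa [poch, sub_eq_add_neg] using this
  · exact DifferentiableOn.fun_finsetProd fun n _ => ((hq.pow n).mul hw).neg.const_add 1

/-! ### The function `Φ` and the discriminant -/

/-- `e(z) = exp(2πiz)`. -/
noncomputable def ee (z : ℂ) : ℂ := Complex.exp (2 * π * Complex.I * z)

lemma ee_add (a b : ℂ) : ee (a + b) = ee a * ee b := by
  simp only [ee, mul_add, Complex.exp_add]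

lemma ee_ne_zero (a : ℂ) : ee a ≠ 0 := Complex.exp_ne_zero _

@[simp] lemma ee_zero : ee 0 = 1 := by simp [ee]

lemma ee_neg (a : ℂ) : ee (-a) = (ee a)⁻¹ := by simp [ee, Complex.exp_neg]

lemma ee_sub (a b : ℂ) : ee (a - b) = ee a / ee b := by
  rw [sub_eq_add_neg, ee_add, ee_neg, div_eq_mul_inv]

lemma ee_int (n : ℤ) : ee n = 1 := by
  rw [ee, mul_comm]; exact Complex.exp_int_mul_two_pi_mul_I n

@[simp] lemma ee_one : ee 1 = 1 := by simpa using ee_int 1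

lemma ee_eq_one_iff (z : ℂ) : ee z = 1 ↔ ∃ n : ℤ, z = n := by
  rw [ee, Complex.exp_eq_one_iff]
  refine exists_congr fun n => ?_
  have : (2 * π * Complex.I : ℂ) ≠ 0 := by simp [Real.pi_ne_zero]
  rw [mul_comm (n : ℂ), mul_right_inj' this]

lemma ee_nat_mul (n : ℕ) (z : ℂ) : ee (n * z) = ee z ^ n := by
  rw [ee, ee, ← Complex.exp_nat_mul]; ring_nf

lemma ee_norm (z : ℂ) : ‖ee z‖ = Real.exp (-(2 * π * z.im)) := by
  simp [ee, Complex.norm_exp]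

lemma ee_norm_lt {τ : ℂ} (h : 0 < τ.im) : ‖ee τ‖ < 1 := by
  rw [ee_norm, Real.exp_lt_one_iff]
  have := Real.pi_pos
  simp only [neg_neg_iff_pos]; positivity

lemma ee_differentiable : Differentiable ℂ ee := by unfold ee; fun_prop

/-- The product `(w; q)_∞ (q/w; q)_∞` with `w = e(z)`, `q = e(τ)`, which vanishes simply on
`ℤτ + ℤ`. -/
noncomputable def sg (τ z : ℂ) : ℂ := poch (ee τ) (ee z) * poch (ee τ) (ee τ * ee (-z))

/-- The function `q w⁻⁶ ((w; q)_∞ (q/w; q)_∞)¹²`: the twelfth power of the Klein form times the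
discriminant, up to the quadratic exponential factor that makes it invariant. -/
noncomputable def Phi (τ z : ℂ) : ℂ := ee τ * ee (-6 * z) * sg τ z ^ 12

lemma sg_add_one (τ z : ℂ) : sg τ (z + 1) = sg τ z := by
  simp [sg, ee_add, ee_neg]

/-- Quasi-periodicity of the theta product. -/
lemma sg_add_tau {τ : ℂ} (h : 0 < τ.im) (z : ℂ) : sg τ (z + τ) = - ee (-z) * sg τ z := by
  have hq := ee_norm_lt h
  have h0 := ee_ne_zero z
  have hq0 := ee_ne_zero τ
  have h1 := poch_succ hq (ee z)
  have h2 := poch_succ hq (ee (-z))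
  have e1 : ee (z + τ) = ee τ * ee z := by rw [ee_add, mul_comm]
  have e2 : ee τ * ee (-(z + τ)) = ee (-z) := by
    rw [neg_add, ee_add, ee_neg τ]; field_simp
  unfold sg
  rw [e1, e2, h2, h1, ee_neg]
  field_simp
  ring

lemma Phi_add_one (τ z : ℂ) : Phi τ (z + 1) = Phi τ z := by
  have : ee (-6 * (z + 1)) = ee (-6 * z) := by
    have := ee_int (-6)
    push_cast at this
    rw [mul_add, ee_add, mul_one, this, mul_one]
  rw [Phi, Phi, sg_add_one, this]

lemma Phi_add_tau {τ : ℂ} (h : 0 < τ.im) (z : ℂ) :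
    Phi τ (z + τ) = ee (-12 * z - 6 * τ) * Phi τ z := by
  rw [Phi, Phi, sg_add_tau h, show -12 * z - 6 * τ = -6 * τ + (12 : ℕ) * (-z) by push_cast; ring,
    ee_add, ee_nat_mul, mul_add, ee_add]
  ring

lemma Phi_zero {τ : ℂ} (h : 0 < τ.im) : Phi τ 0 = 0 := by
  have := poch_succ (ee_norm_lt h) 1
  simp [Phi, sg, this]

/-- `Φ` vanishes only at the lattice points. -/
lemma Phi_eq_zero {τ : ℂ} (h : 0 < τ.im) {z : ℂ} (hz : Phi τ z = 0) :
    ∃ m n : ℤ, z = m * τ + n := by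
  have hq := ee_norm_lt h
  have h1 : sg τ z = 0 := by
    simpa [Phi, ee_ne_zero] using hz
  by_contra! hcon
  revert h1
  refine mul_ne_zero (poch_ne_zero hq fun n hn => ?_) (poch_ne_zero hq fun n hn => ?_)
  · rw [← ee_nat_mul, ← ee_add, ee_eq_one_iff] at hn
    obtain ⟨k, hk⟩ := hn
    exact hcon (-n) k (by push_cast; linear_combination hk)
  · rw [← ee_nat_mul, ← ee_add, ← ee_add, ee_eq_one_iff] at hn
    obtain ⟨k, hk⟩ := hn
    exact hcon (n + 1) (-k) (by push_cast; linear_combination -hk)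

lemma Phi_differentiable {τ : ℂ} (h : 0 < τ.im) : Differentiable ℂ (Phi τ) := by
  have hq := ee_norm_lt h
  have hd := ee_differentiable
  have h1 : DifferentiableOn ℂ (fun z => poch (ee τ) (ee z)) Set.univ :=
    poch_differentiableOn isOpen_univ (by fun_prop) (by fun_prop) (fun _ _ => hq)
  have h2 : DifferentiableOn ℂ (fun z => poch (ee τ) (ee τ * ee (-z))) Set.univ :=
    poch_differentiableOn isOpen_univ (by fun_prop) (by fun_prop) (fun _ _ => hq)
  rw [differentiableOn_univ] at h1 h2
  unfold Phi sg
  fun_prop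

/-- The part of `Phi` that does not vanish at the origin. -/
noncomputable def PhiCore (τ z : ℂ) : ℂ :=
  ee τ * ee (-6 * z) * (poch (ee τ) (ee τ * ee z) * poch (ee τ) (ee τ * ee (-z))) ^ 12

lemma Phi_eq_core {τ : ℂ} (h : 0 < τ.im) (z : ℂ) :
    Phi τ z = (1 - ee z) ^ 12 * PhiCore τ z := by
  rw [Phi, sg, PhiCore, poch_succ (ee_norm_lt h)]
  ring

lemma PhiCore_differentiable {τ : ℂ} (h : 0 < τ.im) : Differentiable ℂ (PhiCore τ) := by
  have hq := ee_norm_lt h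
  have hd := ee_differentiable
  have h1 : DifferentiableOn ℂ (fun z => poch (ee τ) (ee τ * ee z)) Set.univ :=
    poch_differentiableOn isOpen_univ (by fun_prop) (by fun_prop) (fun _ _ => hq)
  have h2 : DifferentiableOn ℂ (fun z => poch (ee τ) (ee τ * ee (-z))) Set.univ :=
    poch_differentiableOn isOpen_univ (by fun_prop) (by fun_prop) (fun _ _ => hq)
  rw [differentiableOn_univ] at h1 h2
  unfold PhiCore
  fun_prop

/-- The discriminant as a product, for an arbitrary complex number in the upper half-plane. -/
noncomputable def Del (τ : ℂ) : ℂ := ee τ * poch (ee τ) (ee τ) ^ 24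

lemma PhiCore_zero (τ : ℂ) : PhiCore τ 0 = Del τ := by
  simp only [PhiCore, Del, mul_zero, ee_zero, neg_zero, mul_one]; ring

lemma poch_pow_tprod {q : ℂ} (hq : ‖q‖ < 1) (w : ℂ) (k : ℕ) :
    (∏' n : ℕ, (1 - q ^ n * w)) ^ k = ∏' n : ℕ, (1 - q ^ n * w) ^ k :=
  ((poch_multipliable hq w).tprod_pow k).symm

lemma Del_eq (τ : UpperHalfPlane) : Del τ = ModularForm.discriminant τ := by
  rw [ModularForm.discriminant_eq_q_prod, Del, poch]
  have h1 : (Function.Periodic.qParam 1 τ) = ee τ := by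
    simp [Function.Periodic.qParam, ee]
  rw [h1]
  congr 1
  rw [poch_pow_tprod (ee_norm_lt τ.2)]
  refine tprod_congr fun n => ?_
  have h2 : ModularForm.eta_q n τ = ee τ ^ n * ee τ := by
    rw [ModularForm.eta_q, h1, pow_succ]
  rw [h2]

lemma Del_ne_zero {τ : ℂ} (h : 0 < τ.im) : Del τ ≠ 0 := by
  have := ModularForm.discriminant_ne_zero ⟨τ, h⟩
  rwa [← Del_eq] at this

lemma im_neg_inv {τ : ℂ} (h : 0 < τ.im) : 0 < (-1 / τ).im := by
  have := UpperHalfPlane.im_inv_neg_coe_pos ⟨τ, h⟩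
  simpa [neg_div, inv_neg] using this

lemma Del_S {τ : ℂ} (h : 0 < τ.im) : Del (-1 / τ) = τ ^ 12 * Del τ := by
  have h1 := congrFun ModularForm.discriminant_S_invariant ⟨τ, h⟩
  rw [ModularForm.SL_slash_apply, UpperHalfPlane.modular_S_smul, ← Del_eq, ← Del_eq] at h1
  have h0 : τ ≠ 0 := by rintro rfl; simp at h
  have h2 : ((-τ)⁻¹ : ℂ) = -1 / τ := by rw [inv_neg, neg_div, one_div]
  rw [ModularGroup.denom_S] at h1
  have h3 : Del (-1 / τ) * τ ^ (-12 : ℤ) = Del τ := by rw [← h2]; exact h1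
  rw [← h3, show (-12 : ℤ) = -((12 : ℕ) : ℤ) by norm_num, zpow_neg, zpow_natCast]
  field_simp

lemma Del_T (τ : ℂ) : Del (τ + 1) = Del τ := by simp [Del, ee_add]

/-! ### The inversion formula -/

lemma Phi_sub_tau {τ : ℂ} (h : 0 < τ.im) (z : ℂ) :
    Phi τ (z - τ) = ee (12 * z - 6 * τ) * Phi τ z := by
  have h1 := Phi_add_tau h (z - τ)
  rw [sub_add_cancel] at h1
  rw [h1, ← mul_assoc, ← ee_add, show 12 * z - 6 * τ + (-12 * (z - τ) - 6 * τ) = 0 by ring,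
    ee_zero, one_mul]

lemma Phi_zero_iff_add_tau {τ : ℂ} (h : 0 < τ.im) (z : ℂ) : Phi τ (z + τ) = 0 ↔ Phi τ z = 0 := by
  rw [Phi_add_tau h]; simp [ee_ne_zero]


/-- The quotient of the two sides of the inversion formula for `Phi`, which is an elliptic function
without poles. -/
noncomputable def sQuot (τ z : ℂ) : ℂ :=
  if Phi τ z = 0 then 1 else Phi (-1 / τ) (z / τ) * ee (-6 * z ^ 2 / τ) / Phi τ z

lemma sQuot_periodic_one {τ : ℂ} (h : 0 < τ.im) : Function.Periodic (sQuot τ) 1 := by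
  intro z
  have h0 : τ ≠ 0 := by rintro rfl; simp at h
  unfold sQuot
  rw [Phi_add_one]
  have e1 : (z + 1) / τ = z / τ - (-1 / τ) := by ring
  have e2 : ee (12 * (z / τ) - 6 * (-1 / τ)) * ee (-6 * (z + 1) ^ 2 / τ) = ee (-6 * z ^ 2 / τ) := by
    rw [← ee_add]; congr 1; field_simp; ring
  rw [e1, Phi_sub_tau (im_neg_inv h), ← e2]
  congr 2
  ring

lemma sQuot_periodic_tau {τ : ℂ} (h : 0 < τ.im) : Function.Periodic (sQuot τ) τ := by
  intro z
  have h0 : τ ≠ 0 := by rintro rfl; simp at h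
  unfold sQuot
  simp only [Phi_zero_iff_add_tau h]
  by_cases hz : Phi τ z = 0
  · simp [hz]
  simp only [hz, if_false]
  have e1 : (z + τ) / τ = z / τ + 1 := by field_simp
  have e2 : ee (-6 * (z + τ) ^ 2 / τ) = ee (-6 * z ^ 2 / τ) * ee (-12 * z - 6 * τ) := by
    rw [← ee_add]; congr 1; field_simp; ring
  rw [e1, Phi_add_one, e2, Phi_add_tau h]
  rw [mul_comm (ee (-12 * z - 6 * τ)), ← mul_assoc, mul_div_mul_right _ _ (ee_ne_zero _)]

/-- `(1 - e(z)) / z`, extended over the origin. -/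
noncomputable def eeSlope : ℂ → ℂ := dslope (fun z => 1 - ee z) 0

lemma eeSlope_zero : eeSlope 0 = -(2 * π * Complex.I) := by
  rw [eeSlope, dslope_same]
  have : HasDerivAt (fun z => 1 - ee z) (-(ee 0 * (2 * π * Complex.I * 1))) 0 := by
    unfold ee
    exact (((hasDerivAt_id (0 : ℂ)).const_mul (2 * π * Complex.I)).cexp).const_sub 1
  rw [this.deriv]; simp

lemma eeSlope_mul (z : ℂ) : 1 - ee z = z * eeSlope z := by
  have := sub_smul_dslope (fun z => 1 - ee z) 0 z
  simp at this
  exact this.symm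

lemma eeSlope_differentiable : Differentiable ℂ eeSlope := by
  rw [← differentiableOn_univ]
  have hd := ee_differentiable
  exact (Complex.differentiableOn_dslope (by simp)).2 (by fun_prop)

/-- Both sides of the inversion formula vanish to order twelve at the origin, with leading coefficients
matched by the weight twelve transformation of the discriminant; hence the value `1` is the right one. -/
lemma sQuot_zero_differentiableAt {τ : ℂ} (h : 0 < τ.im) : DifferentiableAt ℂ (sQuot τ) 0 := by
  have h0 : τ ≠ 0 := by rintro rfl; simp at h
  have hd := ee_differentiable
  have hE := eeSlope_differentiable
  have hP := PhiCore_differentiable h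
  have hP' := PhiCore_differentiable (im_neg_inv h)
  have hE0 : eeSlope 0 ≠ 0 := by rw [eeSlope_zero]; simp [Real.pi_ne_zero]
  have hP0 : PhiCore τ 0 ≠ 0 := by rw [PhiCore_zero]; exact Del_ne_zero h
  let L : ℂ → ℂ := fun z => ee (-6 * z ^ 2 / τ) * (eeSlope (z / τ) / (τ * eeSlope z)) ^ 12 *
    PhiCore (-1 / τ) (z / τ) / PhiCore τ z
  have hL : DifferentiableAt ℂ L 0 := by
    refine DifferentiableAt.div ?_ (hP 0) hP0
    refine DifferentiableAt.mul ?_ (by fun_prop)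
    refine DifferentiableAt.mul (by fun_prop) ?_
    refine DifferentiableAt.pow (DifferentiableAt.div (by fun_prop) (by fun_prop) ?_) 12
    simp [h0, hE0]
  refine hL.congr_of_eventuallyEq ?_
  have n1 : ∀ᶠ z in 𝓝 (0 : ℂ), eeSlope z ≠ 0 := hE.continuous.continuousAt.eventually_ne hE0
  have n2 : ∀ᶠ z in 𝓝 (0 : ℂ), PhiCore τ z ≠ 0 := hP.continuous.continuousAt.eventually_ne hP0
  filter_upwards [n1, n2] with z hz1 hz2
  by_cases hz : z = 0
  · subst hz
    have hD := Del_ne_zero h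
    have : L 0 = 1 := by
      simp only [L, zero_div, PhiCore_zero, Del_S h]
      simp
      field_simp
    rw [this, sQuot, if_pos (Phi_zero h)]
  · have hne : Phi τ z ≠ 0 := by
      rw [Phi_eq_core h, eeSlope_mul]
      exact mul_ne_zero (pow_ne_zero _ (mul_ne_zero hz hz1)) hz2
    rw [sQuot, if_neg hne, Phi_eq_core h, Phi_eq_core (im_neg_inv h), eeSlope_mul, eeSlope_mul]
    simp only [L]
    field_simp

lemma sQuot_differentiable {τ : ℂ} (h : 0 < τ.im) : Differentiable ℂ (sQuot τ) := by
  intro z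
  have h0 : τ ≠ 0 := by rintro rfl; simp at h
  have hd := ee_differentiable
  have hP := Phi_differentiable h
  have hP' := Phi_differentiable (im_neg_inv h)
  by_cases hz : Phi τ z = 0
  · obtain ⟨m, n, rfl⟩ := Phi_eq_zero h hz
    have hper : Function.Periodic (sQuot τ) (m * τ + n * 1) :=
      ((sQuot_periodic_tau h).int_mul m).add_period ((sQuot_periodic_one h).int_mul n)
    have : sQuot τ = fun w => sQuot τ (w - (m * τ + n)) := by
      funext w
      rw [← hper (w - (m * τ + n))]; congr 1; ring
    rw [this]
    have h1 := sQuot_zero_differentiableAt h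
    refine DifferentiableAt.comp (g := sQuot τ) _ ?_ (by fun_prop)
    simpa using h1
  · have hL : DifferentiableAt ℂ
        (fun z => Phi (-1 / τ) (z / τ) * ee (-6 * z ^ 2 / τ) / Phi τ z) z :=
      DifferentiableAt.div (by fun_prop) (by fun_prop) hz
    refine hL.congr_of_eventuallyEq ?_
    filter_upwards [hP.continuous.continuousAt.eventually_ne hz] with w hw
    rw [sQuot, if_neg hw]

/-- Liouville's theorem for elliptic functions. -/
lemma sQuot_eq_one {τ : ℂ} (h : 0 < τ.im) (z : ℂ) : sQuot τ z = 1 := by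
  have hdiff := sQuot_differentiable h
  have hb : Bornology.IsBounded (Set.range (sQuot τ)) := by
    have hc : IsCompact ((fun p : ℝ × ℝ => sQuot τ (p.1 * τ + p.2)) ''
        (Set.Icc 0 1 ×ˢ Set.Icc 0 1)) := by
      refine (isCompact_Icc.prod isCompact_Icc).image ?_
      have := hdiff.continuous
      fun_prop
    refine hc.isBounded.subset ?_
    rintro _ ⟨w, rfl⟩
    set y := w.im / τ.im with hy
    set x := (w - y * τ).re with hx
    have hw : w = y * τ + x := by
      apply Complex.ext
      · simp [hx]
      · simp [hy]; field_simp
    refine ⟨(Int.fract y, Int.fract x), ⟨⟨Int.fract_nonneg _, (Int.fract_lt_one _).le⟩,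
      ⟨Int.fract_nonneg _, (Int.fract_lt_one _).le⟩⟩, ?_⟩
    have hper : Function.Periodic (sQuot τ) (⌊y⌋ * τ + ⌊x⌋ * 1) :=
      ((sQuot_periodic_tau h).int_mul ⌊y⌋).add_period ((sQuot_periodic_one h).int_mul ⌊x⌋)
    dsimp only
    rw [← hper]
    congr 1
    rw [hw, Int.fract, Int.fract]; push_cast; ring
  rw [hdiff.apply_eq_apply_of_bounded hb z 0, sQuot, if_pos (Phi_zero h)]

/-- The inversion formula for `Phi`. -/
lemma Phi_S {τ : ℂ} (h : 0 < τ.im) {z : ℂ} (hz : Phi τ z ≠ 0) :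
    Phi (-1 / τ) (z / τ) = ee (6 * z ^ 2 / τ) * Phi τ z := by
  have h1 := sQuot_eq_one h z
  rw [sQuot, if_neg hz, div_eq_one_iff_eq hz] at h1
  rw [← h1, mul_comm, mul_assoc, ← ee_add, show -6 * z ^ 2 / τ + 6 * z ^ 2 / τ = 0 by ring, ee_zero,
    mul_one]

/-- The twelfth power of the Siegel function `g_{[r,s]}`. -/
noncomputable def G (r s : ℚ) (τ : ℂ) : ℂ := ee (6 * r * (r * τ + s)) * Phi τ (r * τ + s)

lemma G_add_one_left {τ : ℂ} (h : 0 < τ.im) (r s : ℚ) : G (r + 1) s τ = ee (-6 * s) * G r s τ := by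
  unfold G
  have : ((r + 1 : ℚ) : ℂ) * τ + s = (r * τ + s) + τ := by push_cast; ring
  rw [this, Phi_add_tau h, ← mul_assoc, ← mul_assoc, ← ee_add, ← ee_add]
  congr 2; push_cast; ring

lemma G_add_one_right (r s : ℚ) (τ : ℂ) : G r (s + 1) τ = ee (6 * r) * G r s τ := by
  unfold G
  have : (r : ℂ) * τ + (s + 1 : ℚ) = (r * τ + s) + 1 := by push_cast; ring
  rw [this, Phi_add_one, ← mul_assoc, ← ee_add]
  congr 2; ring

lemma ratpt_lattice {τ : ℂ} (h : 0 < τ.im) {r s : ℚ} {m n : ℤ}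
    (e : (r : ℂ) * τ + s = m * τ + n) : r = m ∧ s = n := by
  have h1 := congrArg Complex.im e
  simp at h1
  have h2 : r = m := by
    rcases h1 with h1 | h1
    · exact_mod_cast h1
    · exact absurd h1 h.ne'
  subst h2
  simp at e
  exact ⟨rfl, by exact_mod_cast e⟩

lemma Phi_ne_zero_of_rat {τ : ℂ} (h : 0 < τ.im) {r s : ℚ} (hrs : ¬ ∃ m n : ℤ, r = m ∧ s = n) :
    Phi τ (r * τ + s) ≠ 0 := by
  intro h0
  obtain ⟨m, n, e⟩ := Phi_eq_zero h h0
  exact hrs ⟨m, n, ratpt_lattice h e⟩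

lemma G_ne_zero {τ : ℂ} (h : 0 < τ.im) {r s : ℚ} (hrs : ¬ ∃ m n : ℤ, r = m ∧ s = n) :
    G r s τ ≠ 0 := mul_ne_zero (ee_ne_zero _) (Phi_ne_zero_of_rat h hrs)

lemma Phi_T (τ z : ℂ) : Phi (τ + 1) z = Phi τ z := by simp [Phi, sg, ee_add]

lemma G_T (r s : ℚ) (τ : ℂ) : G r s (τ + 1) = G r (r + s) τ := by
  unfold G
  rw [Phi_T]
  push_cast
  ring_nf

lemma G_S {τ : ℂ} (h : 0 < τ.im) {r s : ℚ} (hrs : ¬ ∃ m n : ℤ, r = m ∧ s = n) :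
    G r s (-1 / τ) = G s (-r) τ := by
  have h0 : τ ≠ 0 := by rintro rfl; simp at h
  have hz : Phi τ ((s : ℂ) * τ + (-r : ℚ)) ≠ 0 := Phi_ne_zero_of_rat h (by
    rintro ⟨m, n, h1, h2⟩
    exact hrs ⟨-n, m, by push_cast; linarith, h1⟩)
  unfold G
  have e1 : (r : ℂ) * (-1 / τ) + s = (s * τ + (-r : ℚ)) / τ := by push_cast; field_simp; ring
  rw [e1, Phi_S h hz, ← mul_assoc, ← ee_add]
  congr 2
  push_cast
  field_simp
  ring

/-! ### Puiseux expansions with algebraic integer coefficients -/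

/-- The ring of all algebraic integers in `ℂ`. -/
abbrev R : Subalgebra ℤ ℂ := integralClosure ℤ ℂ

/-- The filter of neighbourhoods of `i∞` in `ℂ`. -/
def atI : Filter ℂ := comap Complex.im atTop

instance : atI.NeBot := by
  refine comap_neBot fun t ht => ?_
  obtain ⟨x, hx⟩ := (atTop : Filter ℝ).nonempty_of_mem ht
  exact ⟨x * Complex.I, by simpa using hx⟩

lemma tendsto_im_atI : Tendsto Complex.im atI atTop := tendsto_comap

lemma atI_pos : ∀ᶠ τ in atI, 0 < τ.im := tendsto_im_atI.eventually_gt_atTop 0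

/-- The growth rate `|q|⁻ᴬ`. -/
noncomputable def gr (A : ℝ) (τ : ℂ) : ℝ := Real.exp (2 * π * A * τ.im)

/-- `F = O(|q|⁻ᴬ)` at `i∞`. -/
def Og (A : ℝ) (F : ℂ → ℂ) : Prop := F =O[atI] gr A

lemma gr_mul (A B : ℝ) (τ : ℂ) : gr A τ * gr B τ = gr (A + B) τ := by
  rw [gr, gr, gr, ← Real.exp_add]; ring_nf

lemma Og.mono {A B : ℝ} {F : ℂ → ℂ} (h : Og A F) (hAB : A ≤ B) : Og B F := by
  refine IsBigO.trans h (IsBigO.of_bound 1 ?_)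
  filter_upwards [atI_pos] with τ hτ
  have := Real.pi_pos
  unfold gr
  rw [one_mul, Real.norm_of_nonneg (Real.exp_pos _).le, Real.norm_of_nonneg (Real.exp_pos _).le]
  gcongr

lemma Og.mul {A B : ℝ} {F H : ℂ → ℂ} (h : Og A F) (h2 : Og B H) : Og (A + B) (F * H) :=
  (IsBigO.mul h h2).congr_right fun τ => gr_mul A B τ

lemma Og.add {A : ℝ} {F H : ℂ → ℂ} (h : Og A F) (h2 : Og A H) : Og A (F + H) := IsBigO.add h h2

lemma Og.sub {A : ℝ} {F H : ℂ → ℂ} (h : Og A F) (h2 : Og A H) : Og A (F - H) := IsBigO.sub h h2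

lemma Og.neg {A : ℝ} {F : ℂ → ℂ} (h : Og A F) : Og A (-F) := IsBigO.neg_left h

lemma Og.pow {A : ℝ} {F : ℂ → ℂ} (h : Og A F) (k : ℕ) : Og (k * A) (F ^ k) := by
  refine (IsBigO.pow h k).congr_right fun τ => ?_
  rw [gr, gr, ← Real.exp_nat_mul]; ring_nf

lemma Og_const (c : ℂ) : Og 0 (fun _ => c) := by
  refine (isBigO_const_const c (one_ne_zero (α := ℝ)) _).congr_right fun τ => by simp [gr]

lemma Og.congr {A : ℝ} {F H : ℂ → ℂ} (h : Og A F) (e : F =ᶠ[atI] H) : Og A H :=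
  IsBigO.congr' h e EventuallyEq.rfl

/-- The function `q^x`. -/
noncomputable def qp (x : ℝ) (τ : ℂ) : ℂ := ee (x * τ)

lemma qp_norm (x : ℝ) (τ : ℂ) : ‖qp x τ‖ = gr (-x) τ := by
  rw [qp, ee_norm, gr]; simp; ring

lemma qp_add (x y : ℝ) (τ : ℂ) : qp (x + y) τ = qp x τ * qp y τ := by
  rw [qp, qp, qp, ← ee_add]; push_cast; ring_nf

lemma qp_ne_zero (x : ℝ) (τ : ℂ) : qp x τ ≠ 0 := ee_ne_zero _

@[simp] lemma qp_zero (τ : ℂ) : qp 0 τ = 1 := by simp [qp]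

lemma Og_qp (x : ℝ) : Og (-x) (qp x) :=
  IsBigO.of_bound 1 (Eventually.of_forall fun τ => by
    rw [qp_norm, one_mul]; exact le_abs_self _)

lemma gr_tendsto {A : ℝ} (hA : A < 0) : Tendsto (gr A) atI (𝓝 0) := by
  have h := tendsto_im_atI.const_mul_atTop_of_neg (r := 2 * π * A) (by
    have := Real.pi_pos; nlinarith)
  exact Real.tendsto_exp_atBot.comp h

lemma Og.tendsto {A : ℝ} {F : ℂ → ℂ} (h : Og A F) (hA : A < 0) : Tendsto F atI (𝓝 0) :=
  IsBigO.trans_tendsto h (gr_tendsto hA)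

lemma qp_tendsto {x : ℝ} (hx : 0 < x) : Tendsto (qp x) atI (𝓝 0) :=
  (Og_qp x).tendsto (by linarith)

lemma Og_of_tendsto {F : ℂ → ℂ} {c : ℂ} (h : Tendsto F atI (𝓝 c)) : Og 0 F :=
  (h.isBigO_one ℝ).congr_right fun τ => by simp [gr]

/-- The functions `q^x` with rational exponent, as a monoid homomorphism. -/
noncomputable def qpHom : Multiplicative ℚ →* (ℂ → ℂ) where
  toFun x := qp ((x.toAdd : ℚ) : ℝ)
  map_one' := by ext; simp
  map_mul' x y := by ext; simp [qp_add]

/-- Puiseux polynomials in `q` with algebraic integer coefficients. -/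
noncomputable def PP : Subalgebra R (ℂ → ℂ) := Algebra.adjoin R (Set.range qpHom)

lemma qp_mem_PP (x : ℚ) : qp x ∈ PP :=
  Algebra.subset_adjoin ⟨Multiplicative.ofAdd x, rfl⟩

lemma const_mem_PP {c : ℂ} (hc : c ∈ R) : (fun _ => c) ∈ PP :=
  PP.algebraMap_mem ⟨c, hc⟩

lemma PP_growth {P : ℂ → ℂ} (hP : P ∈ PP) : ∃ A : ℝ, 0 ≤ A ∧ Og A P := by
  induction hP using Algebra.adjoin_induction with
  | mem x hx =>
    obtain ⟨x, rfl⟩ := hx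
    exact ⟨|((x.toAdd : ℚ) : ℝ)|, abs_nonneg _, (Og_qp _).mono (neg_le_abs _)⟩
  | algebraMap r => exact ⟨0, le_rfl, Og_const _⟩
  | add x y _ _ hx hy =>
    obtain ⟨A, hA, h1⟩ := hx
    obtain ⟨B, hB, h2⟩ := hy
    exact ⟨max A B, le_max_of_le_left hA, (h1.mono (le_max_left _ _)).add (h2.mono (le_max_right _ _))⟩
  | mul x y _ _ hx hy =>
    obtain ⟨A, hA, h1⟩ := hx
    obtain ⟨B, hB, h2⟩ := hy
    exact ⟨A + B, add_nonneg hA hB, h1.mul h2⟩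

lemma ee_rat_mem (x : ℚ) : ee x ∈ R := by
  have h : ee x ^ x.den = 1 := by
    rw [← ee_nat_mul, ee_eq_one_iff]
    exact ⟨x.num, by exact_mod_cast (by rw [mul_comm]; exact x.mul_den_eq_num)⟩
  exact IsIntegral.of_pow x.den_pos (by rw [h]; exact isIntegral_one)

lemma PP_comp {P : ℂ → ℂ} (hP : P ∈ PP) (x y : ℚ) : (fun τ => P (x * τ + y)) ∈ PP := by
  induction hP using Algebra.adjoin_induction with
  | mem z hz =>
    obtain ⟨z, rfl⟩ := hz
    have : (fun τ => qpHom z (x * τ + y)) = (fun _ => ee ((z.toAdd * y : ℚ) : ℂ)) *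
        qp ((z.toAdd * x : ℚ) : ℝ) := by
      funext τ
      simp only [qpHom, MonoidHom.coe_mk, OneHom.coe_mk, Pi.mul_apply, qp]
      rw [← ee_add]; push_cast; ring_nf
    rw [this]
    exact PP.mul_mem (const_mem_PP (ee_rat_mem _)) (qp_mem_PP _)
  | algebraMap r => exact PP.algebraMap_mem r
  | add f g _ _ hf hg => exact PP.add_mem hf hg
  | mul f g _ _ hf hg => exact PP.mul_mem hf hg

lemma PP_repr {P : ℂ → ℂ} (hP : P ∈ PP) :
    ∃ (S : Finset ℚ) (f : ℚ → ℂ), (∀ x, f x ∈ R) ∧ ∀ τ, P τ = ∑ x ∈ S, f x * qp x τ := by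
  have h : P ∈ Subalgebra.toSubmodule PP := hP
  rw [PP, Algebra.adjoin_eq_span, ← MonoidHom.coe_mrange, Submonoid.closure_eq,
    MonoidHom.coe_mrange, Finsupp.mem_span_range_iff_exists_finsupp] at h
  obtain ⟨c, rfl⟩ := h
  refine ⟨c.support, fun x => (c x : ℂ), fun x => (c x).2, fun τ => ?_⟩
  rw [Finsupp.sum, Finset.sum_apply]
  rfl

/-- A finite sum of distinct powers of `q` that converges at `i∞` converges to its constant
coefficient. -/
lemma PP_limit_aux (S : Finset ℚ) (f : ℚ → ℂ) (hf : ∀ x, f x ∈ R) {c : ℂ}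
    (h : Tendsto (fun τ => ∑ x ∈ S, f x * qp x τ) atI (𝓝 c)) : c ∈ R := by
  induction S using Finset.strongInduction with
  | H S ih =>
    rcases S.eq_empty_or_nonempty with rfl | hne
    · have : c = 0 := tendsto_nhds_unique h (by simp)
      rw [this]; exact R.zero_mem
    obtain ⟨x₀, hx₀, hmin⟩ := S.exists_min_image id hne
    rcases lt_or_ge x₀ 0 with hneg | hpos
    · have h1 : Tendsto (fun τ => qp (-x₀ : ℝ) τ * ∑ x ∈ S, f x * qp x τ) atI (𝓝 (0 * c)) :=
        (qp_tendsto (by exact_mod_cast neg_pos.2 hneg)).mul h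
      have h2 : Tendsto (fun τ => qp (-x₀ : ℝ) τ * ∑ x ∈ S, f x * qp x τ) atI
          (𝓝 (∑ x ∈ S, if x = x₀ then f x₀ else 0)) := by
        simp only [Finset.mul_sum]
        refine tendsto_finsetSum _ fun x hx => ?_
        have e : ∀ τ, qp (-x₀ : ℝ) τ * (f x * qp x τ) = f x * qp ((x - x₀ : ℚ) : ℝ) τ := by
          intro τ
          rw [show ((x - x₀ : ℚ) : ℝ) = -x₀ + x by push_cast; ring, qp_add]; ring
        simp only [e]
        split_ifs with hxx
        · subst hxx; simp
        · have : x₀ < x := lt_of_le_of_ne (hmin x hx) (Ne.symm hxx)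
          simpa using (qp_tendsto (x := ((x - x₀ : ℚ) : ℝ)) (by exact_mod_cast sub_pos.2 this)).const_mul (f x)
      have h3 := tendsto_nhds_unique h1 h2
      rw [Finset.sum_ite_eq' S x₀, if_pos hx₀, zero_mul] at h3
      refine ih (S.erase x₀) (Finset.erase_ssubset hx₀) ?_
      refine h.congr fun τ => ?_
      rw [← Finset.add_sum_erase S _ hx₀, ← h3]; simp
    · have h2 : Tendsto (fun τ => ∑ x ∈ S, f x * qp x τ) atI
          (𝓝 (∑ x ∈ S, if x = 0 then f x else 0)) := by
        refine tendsto_finsetSum _ fun x hx => ?_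
        split_ifs with hxx
        · subst hxx; simp
        · have : 0 < x := lt_of_le_of_ne (hpos.trans (hmin x hx)) (Ne.symm hxx)
          simpa using (qp_tendsto (x := (x : ℝ)) (by exact_mod_cast this)).const_mul (f x)
      rw [tendsto_nhds_unique h h2]
      exact R.sum_mem fun x _ => by split_ifs; exacts [hf x, R.zero_mem]

/-- `F` has, to every order, a Puiseux expansion in `q` with algebraic integer coefficients. -/
def IntExp (F : ℂ → ℂ) : Prop := ∀ m : ℝ, ∃ P ∈ PP, Og (-m) (F - P)

lemma IntExp.of_PP {F : ℂ → ℂ} (h : F ∈ PP) : IntExp F := fun m =>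
  ⟨F, h, by rw [sub_self]; exact isBigO_zero _ _⟩

lemma IntExp.growth {F : ℂ → ℂ} (h : IntExp F) : ∃ A : ℝ, 0 ≤ A ∧ Og A F := by
  obtain ⟨P, hP, h1⟩ := h 0
  obtain ⟨A, hA, h2⟩ := PP_growth hP
  refine ⟨A, hA, ?_⟩
  have := (h1.mono (by simpa using hA)).add h2
  rwa [sub_add_cancel] at this

/-- The limit at `i∞` of a function with an integral expansion is an algebraic integer. -/
lemma IntExp.limit {F : ℂ → ℂ} (h : IntExp F) {c : ℂ} (hc : Tendsto F atI (𝓝 c)) : c ∈ R := by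
  obtain ⟨P, hP, h1⟩ := h 1
  obtain ⟨S, f, hf, hS⟩ := PP_repr hP
  refine PP_limit_aux S f hf ?_
  have h2 := hc.sub (h1.tendsto (by norm_num))
  rw [sub_zero] at h2
  refine h2.congr fun τ => ?_
  rw [← hS]; simp

lemma IntExp.congr {F H : ℂ → ℂ} (h : IntExp F) (e : F =ᶠ[atI] H) : IntExp H := fun m => by
  obtain ⟨P, hP, h1⟩ := h m
  exact ⟨P, hP, h1.congr (e.sub EventuallyEq.rfl)⟩

lemma IntExp.of_approx {F : ℂ → ℂ} (h : ∀ m : ℝ, ∃ P, IntExp P ∧ Og (-m) (F - P)) : IntExp F := by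
  intro m
  obtain ⟨P, hP, h1⟩ := h m
  obtain ⟨Q, hQ, h2⟩ := hP m
  refine ⟨Q, hQ, ?_⟩
  have := h1.add h2
  rwa [sub_add_sub_cancel] at this

lemma IntExp.add {F H : ℂ → ℂ} (h1 : IntExp F) (h2 : IntExp H) : IntExp (F + H) := fun m => by
  obtain ⟨P, hP, hp⟩ := h1 m
  obtain ⟨Q, hQ, hq⟩ := h2 m
  exact ⟨P + Q, PP.add_mem hP hQ, by rw [add_sub_add_comm]; exact hp.add hq⟩

lemma IntExp.mul {F H : ℂ → ℂ} (h1 : IntExp F) (h2 : IntExp H) : IntExp (F * H) := by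
  obtain ⟨A, hA, gA⟩ := h1.growth
  obtain ⟨B, hB, gB⟩ := h2.growth
  refine IntExp.of_approx fun m => ?_
  obtain ⟨P, hP, hp⟩ := h1 (|m| + B)
  obtain ⟨Q, hQ, hq⟩ := h2 (|m| + A)
  refine ⟨P * Q, .of_PP (PP.mul_mem hP hQ), ?_⟩
  have gP : Og A P := by
    have := gA.sub (hp.mono (B := A) (by have := abs_nonneg m; linarith))
    rwa [sub_sub_cancel] at this
  have e : F * H - P * Q = (F - P) * H + P * (H - Q) := by ring
  have hm := le_abs_self m
  rw [e]
  exact ((hp.mul gB).mono (by linarith)).add ((gP.mul hq).mono (by linarith))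

/-- The functions with algebraic integer Puiseux expansions form an algebra. -/
noncomputable def IE : Subalgebra R (ℂ → ℂ) where
  carrier := {F | IntExp F}
  mul_mem' := IntExp.mul
  add_mem' := IntExp.add
  algebraMap_mem' r := .of_PP (PP.algebraMap_mem r)

lemma mem_IE {F : ℂ → ℂ} : F ∈ IE ↔ IntExp F := Iff.rfl

lemma tendsto_affine {x : ℚ} (hx : 0 < x) (y : ℚ) : Tendsto (fun τ : ℂ => x * τ + y) atI atI := by
  refine tendsto_comap_iff.2 ?_
  have : (Complex.im ∘ fun τ : ℂ => (x : ℂ) * τ + y) = fun τ => (x : ℝ) * τ.im := by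
    funext τ; simp
  rw [this]
  exact tendsto_im_atI.const_mul_atTop (by exact_mod_cast hx)

lemma Og.comp {A : ℝ} {F : ℂ → ℂ} (h : Og A F) {x : ℚ} (hx : 0 < x) (y : ℚ) :
    Og (x * A) (fun τ => F (x * τ + y)) := by
  refine (IsBigO.comp_tendsto h (tendsto_affine hx y)).congr_right fun τ => ?_
  simp [gr]; ring

lemma IntExp.comp {F : ℂ → ℂ} (h : IntExp F) {x : ℚ} (hx : 0 < x) (y : ℚ) :
    IntExp (fun τ => F (x * τ + y)) := fun m => by
  have hx' : (0 : ℝ) < x := by exact_mod_cast hx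
  obtain ⟨P, hP, h1⟩ := h (m / x)
  have h2 := (h1.comp hx y).mono (B := -m) (le_of_eq (by field_simp))
  exact ⟨_, PP_comp hP x y, h2⟩

/-- `F = c q^x (1 + E)` near `i∞`, where `c` is a unit of the ring of algebraic integers and `E` is
an expansion with positive exponents. -/
def UnitLead (c : ℂ) (x : ℚ) (F : ℂ → ℂ) : Prop := c ≠ 0 ∧ c ∈ R ∧ c⁻¹ ∈ R ∧
  ∃ E : ℂ → ℂ, IntExp E ∧ (∃ ε : ℝ, 0 < ε ∧ Og (-ε) E) ∧ ∀ᶠ τ in atI, F τ = c * qp x τ * (1 + E τ)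

lemma UnitLead.intExp {c : ℂ} {x : ℚ} {F : ℂ → ℂ} (h : UnitLead c x F) : IntExp F := by
  obtain ⟨_, hc, _, E, hE, _, e⟩ := h
  have h1 : IntExp ((fun _ => c) * qp x * (1 + E)) :=
    ((IntExp.of_PP (const_mem_PP hc)).mul (.of_PP (qp_mem_PP x))).mul (IE.add_mem IE.one_mem hE)
  exact h1.congr (e.mono fun τ hτ => by simp [hτ])

lemma UnitLead.mul {c d : ℂ} {x y : ℚ} {F H : ℂ → ℂ} (h : UnitLead c x F) (h2 : UnitLead d y H) :
    UnitLead (c * d) (x + y) (F * H) := by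
  obtain ⟨c0, hc, hc', E, hE, ⟨ε, hε, gE⟩, e⟩ := h
  obtain ⟨d0, hd, hd', D, hD, ⟨δ, hδ, gD⟩, e'⟩ := h2
  refine ⟨mul_ne_zero c0 d0, R.mul_mem hc hd, by rw [mul_inv]; exact R.mul_mem hc' hd',
    E + D + E * D, (hE.add hD).add (hE.mul hD), ⟨min ε δ, lt_min hε hδ, ?_⟩, ?_⟩
  · have m1 := min_le_left ε δ
    have m2 := min_le_right ε δ
    exact ((gE.mono (by linarith)).add (gD.mono (by linarith))).add
      ((gE.mul gD).mono (by linarith))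
  · filter_upwards [e, e'] with τ h1 h2
    rw [Pi.mul_apply, h1, h2]
    push_cast
    rw [qp_add]
    simp
    ring

lemma UnitLead.one : UnitLead 1 0 1 :=
  ⟨one_ne_zero, R.one_mem, by simp, 0, IE.zero_mem,
    ⟨1, one_pos, isBigO_zero _ _⟩, by simp⟩

lemma UnitLead.congr {c : ℂ} {x : ℚ} {F H : ℂ → ℂ} (h : UnitLead c x F) (e : F =ᶠ[atI] H) :
    UnitLead c x H := by
  obtain ⟨c0, hc, hc', E, hE, gE, e'⟩ := h
  exact ⟨c0, hc, hc', E, hE, gE, by filter_upwards [e, e'] with τ h1 h2; rw [← h1, h2]⟩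

lemma UnitLead.pow {c : ℂ} {x : ℚ} {F : ℂ → ℂ} (h : UnitLead c x F) (k : ℕ) :
    UnitLead (c ^ k) (k * x) (F ^ k) := by
  induction k with
  | zero => simpa using UnitLead.one
  | succ k ih =>
    have := ih.mul h
    rw [pow_succ, pow_succ]; convert this using 1; push_cast; ring

/-- Geometric series: `1 + E` is invertible when `E` has positive order. -/
lemma IntExp.inv_one_add {E : ℂ → ℂ} (hE : IntExp E) {ε : ℝ} (hε : 0 < ε) (gE : Og (-ε) E) :
    IntExp (fun τ => (1 + E τ)⁻¹) := by
  have hlim : Tendsto (fun τ => 1 + E τ) atI (𝓝 1) := by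
    simpa using (gE.tendsto (by linarith)).const_add 1
  have hne : ∀ᶠ τ in atI, 1 + E τ ≠ 0 := hlim.eventually_ne one_ne_zero
  have hb : Og 0 (fun τ => (1 + E τ)⁻¹) := Og_of_tendsto (hlim.inv₀ one_ne_zero)
  refine IntExp.of_approx fun m => ?_
  obtain ⟨k, hk⟩ := exists_nat_ge (m / ε)
  rw [div_le_iff₀ hε] at hk
  refine ⟨∑ i ∈ Finset.range k, (-E) ^ i,
    IE.sum_mem fun i _ => IE.pow_mem (IE.neg_mem hE) i, ?_⟩
  have h1 := ((gE.neg.pow k).mul hb).mono (B := -m) (by linarith)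
  refine h1.congr ?_
  filter_upwards [hne] with τ hτ
  have hg := mul_geom_sum (-E τ) k
  simp only [Pi.mul_apply, Pi.sub_apply, Pi.pow_apply, Pi.neg_apply, Finset.sum_apply]
  field_simp
  linear_combination -hg

lemma UnitLead.inv {c : ℂ} {x : ℚ} {F : ℂ → ℂ} (h : UnitLead c x F) :
    UnitLead c⁻¹ (-x) (F⁻¹) := by
  obtain ⟨c0, hc, hc', E, hE, ⟨ε, hε, gE⟩, e⟩ := h
  have hI := hE.inv_one_add hε gE
  have hlim : Tendsto (fun τ => 1 + E τ) atI (𝓝 1) := by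
    simpa using (gE.tendsto (by linarith)).const_add 1
  have hne : ∀ᶠ τ in atI, 1 + E τ ≠ 0 := hlim.eventually_ne one_ne_zero
  have hb : Og 0 (fun τ => (1 + E τ)⁻¹) := Og_of_tendsto (hlim.inv₀ one_ne_zero)
  refine ⟨inv_ne_zero c0, hc', by rwa [inv_inv], -E * fun τ => (1 + E τ)⁻¹,
    (IE.neg_mem hE : IntExp (-E)).mul hI, ⟨ε, hε, (gE.neg.mul hb).mono (by simp)⟩, ?_⟩
  filter_upwards [e, hne] with τ h1 h2
  have h3 := qp_ne_zero x τ
  have h4 : qp (-x : ℚ) τ = (qp x τ)⁻¹ := by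
    rw [← mul_eq_one_iff_eq_inv₀ h3, ← qp_add]; simp
  rw [Pi.inv_apply, h1, h4]
  simp only [Pi.mul_apply, Pi.neg_apply]
  field_simp
  ring

lemma UnitLead.limit {c : ℂ} {x : ℚ} {F : ℂ → ℂ} (h : UnitLead c x F) :
    Tendsto (fun τ => F τ * qp (-x : ℝ) τ) atI (𝓝 c) := by
  obtain ⟨c0, hc, hc', E, hE, ⟨ε, hε, gE⟩, e⟩ := h
  have hlim : Tendsto (fun τ => c * (1 + E τ)) atI (𝓝 c) := by
    simpa using ((gE.tendsto (by linarith)).const_add 1).const_mul c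
  refine hlim.congr' ?_
  filter_upwards [e] with τ h1
  have h4 : qp x τ * qp (-x : ℝ) τ = 1 := by rw [← qp_add]; simp
  rw [h1]
  linear_combination (-(c * (1 + E τ))) * h4

lemma UnitLead.comp {c : ℂ} {x : ℚ} {F : ℂ → ℂ} (h : UnitLead c x F) {y : ℚ} (hy : 0 < y) (z : ℚ) :
    UnitLead (c * ee ((x * z : ℚ) : ℂ)) (x * y) (fun τ => F (y * τ + z)) := by
  obtain ⟨c0, hc, hc', E, hE, ⟨ε, hε, gE⟩, e⟩ := h
  have hy' : (0 : ℝ) < y := by exact_mod_cast hy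
  refine ⟨mul_ne_zero c0 (ee_ne_zero _), R.mul_mem hc (ee_rat_mem _), ?_, _, hE.comp hy z,
    ⟨y * ε, by positivity, (gE.comp hy z).mono (by linarith)⟩, ?_⟩
  · rw [mul_inv, ← ee_neg]
    have := ee_rat_mem (-(x * z))
    push_cast at this ⊢
    exact R.mul_mem hc' this
  · filter_upwards [(tendsto_affine hy z).eventually e] with τ h1
    rw [h1]
    have : qp x (y * τ + z) = ee ((x * z : ℚ) : ℂ) * qp ((x * y : ℚ) : ℝ) τ := by
      rw [qp, qp, ← ee_add]; push_cast; ring_nf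
    rw [this]; ring

/-! ### Expansions of the Siegel functions -/

/-- The upper half-plane as a subset of `ℂ`. -/
def HH : Set ℂ := {τ | 0 < τ.im}

lemma HH_open : IsOpen HH := isOpen_lt continuous_const Complex.continuous_im

lemma poch_tail {w : ℂ → ℂ} {y : ℝ} (hy : 0 < y) (hw : ∀ τ, ‖w τ‖ = gr (-y) τ) :
    Og (-y) (fun τ => poch (ee τ) (w τ) - 1) := by
  refine IsBigO.of_bound 4 ?_
  have h1 : ∀ᶠ τ in atI, gr (-y) τ < 1 / 2 := (gr_tendsto (by linarith)).eventually_lt_const (by norm_num)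
  have h2 : ∀ᶠ τ in atI, gr (-1) τ < 1 / 2 :=
    (gr_tendsto (by norm_num)).eventually_lt_const (by norm_num)
  filter_upwards [h1, h2, atI_pos] with τ h1 h2 h3
  have hq : ‖ee τ‖ = gr (-1) τ := by rw [ee_norm, gr]; ring_nf
  have hb := poch_bound (ee_norm_lt h3) (w τ)
  rw [hw, hq] at hb
  have hpos : 0 < gr (-y) τ := Real.exp_pos _
  have ht : gr (-y) τ / (1 - gr (-1) τ) ≤ 2 * gr (-y) τ := by
    rw [div_le_iff₀ (by linarith)]; nlinarith
  have ht0 : 0 ≤ gr (-y) τ / (1 - gr (-1) τ) := div_nonneg hpos.le (by linarith)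
  have h5 := Real.abs_exp_sub_one_le (x := gr (-y) τ / (1 - gr (-1) τ))
    (by rw [abs_of_nonneg ht0]; linarith)
  rw [abs_of_nonneg ht0] at h5
  rw [Real.norm_of_nonneg hpos.le]
  linarith [le_abs_self (Real.exp (gr (-y) τ / (1 - gr (-1) τ)) - 1)]

lemma poch_lead {x : ℚ} (hx : 0 < x) (s : ℚ) :
    UnitLead 1 0 (fun τ => poch (ee τ) (ee (x * τ + s))) := by
  have hx' : (0 : ℝ) < x := by exact_mod_cast hx
  have hn : ∀ (k : ℕ) τ, ‖ee τ ^ k * ee (x * τ + s)‖ = gr (-(k + x)) τ := by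
    intro k τ
    rw [← ee_nat_mul, ← ee_add, ee_norm, gr]
    congr 1
    simp
    ring
  have htail : ∀ k : ℕ, Og (-(k + x)) (fun τ => poch (ee τ) (ee τ ^ k * ee (x * τ + s)) - 1) :=
    fun k => poch_tail (by positivity) (hn k)
  have hfac : ∀ n : ℕ, (fun τ => 1 - ee τ ^ n * ee (x * τ + s)) ∈ PP := by
    intro n
    have : (fun τ => 1 - ee τ ^ n * ee (x * τ + s)) =
        1 - (fun _ => ee (s : ℚ)) * qp ((n + x : ℚ) : ℝ) := by
      funext τ
      simp only [Pi.sub_apply, Pi.one_apply, Pi.mul_apply, qp]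
      rw [← ee_nat_mul, ← ee_add, ← ee_add]
      push_cast; ring_nf
    rw [this]
    exact PP.sub_mem PP.one_mem (PP.mul_mem (const_mem_PP (ee_rat_mem _)) (qp_mem_PP _))
  have hprod : ∀ k : ℕ, (fun τ => ∏ n ∈ Finset.range k, (1 - ee τ ^ n * ee (x * τ + s))) ∈ PP := by
    intro k
    have := PP.prod_mem (t := Finset.range k) fun n _ => hfac n
    convert this using 1
    funext τ; simp
  have hgr : ∀ k : ℕ, Og 0 (fun τ => ∏ n ∈ Finset.range k, (1 - ee τ ^ n * ee (x * τ + s))) := by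
    intro k
    refine Og_of_tendsto (c := ∏ n ∈ Finset.range k, (1 - 0)) (tendsto_finsetProd _ fun n _ => ?_)
    refine Tendsto.const_sub 1 ?_
    rw [tendsto_zero_iff_norm_tendsto_zero]
    simp only [hn]
    exact gr_tendsto (by linarith [(Nat.cast_nonneg n : (0 : ℝ) ≤ n)])
  have hF : IntExp (fun τ => poch (ee τ) (ee (x * τ + s))) := by
    intro m
    obtain ⟨k, hk⟩ := exists_nat_ge m
    refine ⟨_, hprod k, (((hgr k).mul (htail k)).mono (B := -m) (by linarith)).congr ?_⟩
    filter_upwards [atI_pos] with τ hτ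
    simp only [Pi.mul_apply, Pi.sub_apply]
    rw [poch_split (ee_norm_lt hτ) (ee (x * τ + s)) k]
    ring
  refine ⟨one_ne_zero, R.one_mem, by simp, _, IE.sub_mem hF IE.one_mem, ⟨x, hx', ?_⟩, ?_⟩
  · have := htail 0
    simp only [pow_zero, one_mul, CharP.cast_eq_zero, zero_add] at this
    exact this
  · simp

lemma ee_lead (x y : ℚ) : UnitLead (ee y) x (fun τ => ee (x * τ + y)) := by
  refine ⟨ee_ne_zero _, ee_rat_mem _, ?_, 0, IE.zero_mem, ⟨1, one_pos, isBigO_zero _ _⟩, ?_⟩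
  · have := ee_rat_mem (-y)
    push_cast at this
    rwa [ee_neg] at this
  · refine Eventually.of_forall fun τ => ?_
    simp [qp, ← ee_add, add_comm]

lemma Del_lead : UnitLead 1 1 Del := by
  have h := (ee_lead 1 0).mul ((poch_lead one_pos 0).pow 24)
  have e : Del = (fun τ : ℂ => ee (((1 : ℚ) : ℂ) * τ + ((0 : ℚ) : ℂ))) *
      (fun τ : ℂ => poch (ee τ) (ee (((1 : ℚ) : ℂ) * τ + ((0 : ℚ) : ℂ)))) ^ 24 := by
    funext τ
    simp [Del]
  rw [e]
  convert h using 1 <;> simp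

lemma PhiCore_lead (s : ℚ) : UnitLead (ee (-6 * s)) 1 (fun τ => PhiCore τ s) := by
  have h := ((ee_lead 1 (-6 * s)).mul
    (((poch_lead one_pos s).mul (poch_lead one_pos (-s))).pow 12))
  have e : (fun τ => PhiCore τ s) = (fun τ : ℂ => ee (((1 : ℚ) : ℂ) * τ + ((-6 * s : ℚ) : ℂ))) *
      ((fun τ : ℂ => poch (ee τ) (ee (((1 : ℚ) : ℂ) * τ + (s : ℂ)))) *
      (fun τ : ℂ => poch (ee τ) (ee (((1 : ℚ) : ℂ) * τ + ((-s : ℚ) : ℂ))))) ^ 12 := by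
    funext τ
    simp [PhiCore, ee_add]
  rw [e]
  convert h using 1 <;> simp

/-- For `r = 0` the factor `(1 - e(s))¹²`, in general not a unit, splits off. -/
lemma G_zero {τ : ℂ} (h : 0 < τ.im) (s : ℚ) : G 0 s τ = (1 - ee s) ^ 12 * PhiCore τ s := by
  rw [G, ← Phi_eq_core h]; simp

/-- For `0 < r < 1` the leading coefficient of the Siegel function is a unit, since the factor
`1 - q^r e(s)` tends to `1`. -/
lemma G_lead {r : ℚ} (h0 : 0 < r) (h1 : r < 1) (s : ℚ) :
    UnitLead (ee (6 * r * s - 6 * s)) (6 * r ^ 2 + 1 - 6 * r) (G r s) := by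
  have h := ((ee_lead (6 * r ^ 2 + 1 - 6 * r) (6 * r * s - 6 * s)).mul
    (((poch_lead h0 s).mul (poch_lead (sub_pos.2 h1) (-s))).pow 12))
  have e : G r s = (fun τ : ℂ => ee (((6 * r ^ 2 + 1 - 6 * r : ℚ) : ℂ) * τ +
      ((6 * r * s - 6 * s : ℚ) : ℂ))) *
      ((fun τ : ℂ => poch (ee τ) (ee (((r : ℚ) : ℂ) * τ + (s : ℂ)))) *
      (fun τ : ℂ => poch (ee τ) (ee (((1 - r : ℚ) : ℂ) * τ + ((-s : ℚ) : ℂ))))) ^ 12 := by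
    funext τ
    simp only [G, Phi, sg, Pi.mul_apply, Pi.pow_apply]
    rw [← mul_assoc, ← mul_assoc, ← ee_add, ← ee_add, ← ee_add]
    push_cast
    ring_nf
  rw [e]
  convert h using 1 <;> simp

lemma Del_diff : DifferentiableOn ℂ Del HH := by
  have hd := ee_differentiable
  have h1 : DifferentiableOn ℂ (fun z => poch (ee z) (ee z)) HH :=
    poch_differentiableOn HH_open (by fun_prop) (by fun_prop) (fun _ h => ee_norm_lt h)
  unfold Del
  fun_prop

lemma G_diff (r s : ℚ) : DifferentiableOn ℂ (G r s) HH := by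
  have hd := ee_differentiable
  have h1 : DifferentiableOn ℂ (fun z => poch (ee z) (ee (r * z + s))) HH :=
    poch_differentiableOn HH_open (by fun_prop) (by fun_prop) (fun _ h => ee_norm_lt h)
  have h2 : DifferentiableOn ℂ (fun z => poch (ee z) (ee z * ee (-(r * z + s)))) HH :=
    poch_differentiableOn HH_open (by fun_prop) (by fun_prop) (fun _ h => ee_norm_lt h)
  unfold G Phi sg
  fun_prop

/-- Holomorphic functions on the upper half-plane having algebraic integer Puiseux expansions. -/
noncomputable def HA : Subalgebra R (ℂ → ℂ) where
  carrier := {F | IntExp F ∧ DifferentiableOn ℂ F HH}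
  mul_mem' h h2 := ⟨h.1.mul h2.1, h.2.mul h2.2⟩
  add_mem' h h2 := ⟨h.1.add h2.1, h.2.add h2.2⟩
  algebraMap_mem' r := ⟨.of_PP (PP.algebraMap_mem r), differentiableOn_const _⟩

lemma mem_HA {F : ℂ → ℂ} : F ∈ HA ↔ IntExp F ∧ DifferentiableOn ℂ F HH := Iff.rfl

/-! ### The modular invariant -/

/-- A generator of the field of modular functions of level one with a simple pole at the cusp:
minus the second elementary symmetric function of the three functions `g¹²` at the points of
order two. -/
noncomputable def jj (τ : ℂ) : ℂ :=
  -(G 0 (1 / 2) τ * G (1 / 2) 0 τ + G 0 (1 / 2) τ * G (1 / 2) (1 / 2) τ +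
    G (1 / 2) 0 τ * G (1 / 2) (1 / 2) τ)

lemma not_int_half {r : ℚ} (h : r = 1 / 2) : ¬ ∃ m : ℤ, r = m := by
  rintro ⟨m, hm⟩
  have : (2 * m : ℚ) = 1 := by rw [← hm, h]; norm_num
  have h2 : 2 * m = 1 := by exact_mod_cast this
  omega

lemma ee_three : ee (6 * ((1 / 2 : ℚ) : ℂ)) = 1 := by
  rw [ee_eq_one_iff]
  exact ⟨3, by norm_num⟩

lemma jj_T (τ : ℂ) : jj (τ + 1) = jj τ := by
  have h1 : G (1 / 2) (1 / 2 + 1 / 2) τ = G (1 / 2) 0 τ := by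
    have := G_add_one_right (1 / 2) 0 τ
    rw [ee_three, one_mul] at this
    rw [← this]; norm_num
  simp only [jj, G_T, zero_add, add_zero, h1]
  ring

lemma jj_S {τ : ℂ} (h : 0 < τ.im) : jj (-1 / τ) = jj τ := by
  have h1 : G (1 / 2) (-(1 / 2)) τ = G (1 / 2) (1 / 2) τ := by
    have := G_add_one_right (1 / 2) (-(1 / 2)) τ
    rw [ee_three, one_mul] at this
    rw [← this]; norm_num
  have h2 : G 0 (-(1 / 2)) τ = G 0 (1 / 2) τ := by
    have := G_add_one_right 0 (-(1 / 2)) τ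
    rw [Rat.cast_zero, mul_zero, ee_zero, one_mul] at this
    rw [← this]; norm_num
  unfold jj
  rw [G_S h, G_S h, G_S h, h1, h2, neg_zero]
  · ring
  · rintro ⟨m, n, h1, _⟩; exact not_int_half rfl ⟨m, h1⟩
  · rintro ⟨m, n, h1, _⟩; exact not_int_half rfl ⟨m, h1⟩
  · rintro ⟨m, n, _, h1⟩; exact not_int_half rfl ⟨n, h1⟩

lemma UnitLead.add {c : ℂ} {x : ℚ} {F H : ℂ → ℂ} (h : UnitLead c x F) (hH : IntExp H) {y : ℝ}
    (hy : (x : ℝ) < y) (gH : Og (-y) H) : UnitLead c x (F + H) := by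
  obtain ⟨c0, hc, hc', E, hE, ⟨ε, hε, gE⟩, e⟩ := h
  have hD := ((IntExp.of_PP (const_mem_PP hc')).mul (IntExp.of_PP (qp_mem_PP (-x)))).mul hH
  have gD := ((Og_const c⁻¹).mul (Og_qp (-x : ℚ))).mul gH
  refine ⟨c0, hc, hc', _, hE.add hD, ⟨min ε (y - x), lt_min hε (by linarith),
    (gE.mono (by linarith [min_le_left ε (y - x)])).add (gD.mono ?_)⟩, ?_⟩
  · push_cast
    linarith [min_le_right ε (y - x)]
  · filter_upwards [e] with τ h1
    have h4 : qp x τ * qp (-x : ℚ) τ = 1 := by rw [← qp_add]; simp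
    simp only [Pi.add_apply, Pi.mul_apply, h1]
    field_simp
    linear_combination (-H τ) * h4

lemma UnitLead.growth {c : ℂ} {x : ℚ} {F : ℂ → ℂ} (h : UnitLead c x F) : Og (-x) F := by
  have h1 := (Og_of_tendsto h.limit).mul (Og_qp x)
  rw [zero_add] at h1
  refine h1.congr (Eventually.of_forall fun τ => ?_)
  have h4 : qp x τ * qp (-x : ℝ) τ = 1 := by rw [← qp_add]; simp
  simp only [Pi.mul_apply]
  linear_combination F τ * h4

lemma UnitLead.neg {c : ℂ} {x : ℚ} {F : ℂ → ℂ} (h : UnitLead c x F) : UnitLead (-c) x (-F) := by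
  obtain ⟨c0, hc, hc', E, hE, gE, e⟩ := h
  refine ⟨neg_ne_zero.2 c0, R.neg_mem hc, ?_, E, hE, gE, e.mono fun τ h1 => ?_⟩
  · rw [inv_neg]; exact R.neg_mem hc'
  · rw [Pi.neg_apply, h1]; ring

lemma G_intExp_zero (s : ℚ) : IntExp (G 0 s) := by
  have h1 : (fun _ : ℂ => (1 - ee s) ^ 12) ∈ PP :=
    const_mem_PP (R.pow_mem (R.sub_mem R.one_mem (ee_rat_mem s)) 12)
  exact ((IntExp.of_PP h1).mul (PhiCore_lead s).intExp).congr
    (atI_pos.mono fun τ h => (G_zero h s).symm)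

lemma G_growth_zero (s : ℚ) : Og (-1) (G 0 s) := by
  have h1 := ((Og_const ((1 - ee s) ^ 12)).mul (PhiCore_lead s).growth).congr
    (atI_pos.mono fun τ h => (G_zero h s).symm)
  simpa using h1

/-- The invariant is `q⁻¹ + ⋯` at the cusp: the leading term comes from the product of the two functions
with `r = 1/2`, and the other two products are `O(q^{1/2})`. -/
lemma jj_lead : UnitLead 1 (-1) jj := by
  have l1 := G_lead (r := 1 / 2) (by norm_num) (by norm_num) 0
  have l2 := G_lead (r := 1 / 2) (by norm_num) (by norm_num) (1 / 2)
  have hc : ee (6 * ((1 / 2 : ℚ) : ℂ) * ((1 / 2 : ℚ) : ℂ) - 6 * ((1 / 2 : ℚ) : ℂ)) = -1 := by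
    rw [ee, show 2 * π * Complex.I * (6 * ((1 / 2 : ℚ) : ℂ) * ((1 / 2 : ℚ) : ℂ) -
      6 * ((1 / 2 : ℚ) : ℂ)) = π * Complex.I + (-2 : ℤ) * (2 * π * Complex.I) by push_cast; ring,
      Complex.exp_add, Complex.exp_int_mul_two_pi_mul_I, Complex.exp_pi_mul_I, mul_one]
  have hm := (l1.mul l2).neg
  have hH := ((G_intExp_zero (1 / 2)).mul l1.intExp).add ((G_intExp_zero (1 / 2)).mul l2.intExp)
  have gH := ((G_growth_zero (1 / 2)).mul l1.growth).add ((G_growth_zero (1 / 2)).mul l2.growth)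
  have := hm.add (IE.neg_mem hH) (y := 1 / 2) (by norm_num) (gH.neg.mono (by norm_num))
  rw [hc] at this
  convert this using 1
  · simp
  · norm_num
  · funext τ
    simp [jj]

lemma jj_mem : jj ∈ HA :=
  ⟨jj_lead.intExp, by
    have h1 := G_diff 0 (1 / 2)
    have h2 := G_diff (1 / 2) 0
    have h3 := G_diff (1 / 2) (1 / 2)
    unfold jj
    fun_prop⟩

/-! ### Level one functions as polynomials in the modular invariant -/

/-- Invariance under the full modular group, expressed through its two generators. -/
def ModInv (F : ℂ → ℂ) : Prop :=
  (∀ τ ∈ HH, F (τ + 1) = F τ) ∧ ∀ τ ∈ HH, F (-1 / τ) = F τ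

lemma jj_inv : ModInv jj := ⟨fun τ _ => jj_T τ, fun _ h => jj_S h⟩

/-- A holomorphic modular function of level one that is bounded at the cusp is constant. -/
lemma const_of_bounded {F : ℂ → ℂ} (hd : DifferentiableOn ℂ F HH) (hi : ModInv F) (hb : Og 0 F) :
    ∃ c, ∀ τ ∈ HH, F τ = c := by
  let f : UpperHalfPlane → ℂ := fun τ => F τ
  have hS : SlashAction.map (0 : ℤ) ModularGroup.S f = f := by
    funext τ
    rw [ModularForm.SL_slash_apply, UpperHalfPlane.modular_S_smul]
    have h1 := hi.2 τ τ.2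
    simp only [neg_zero, zpow_zero, mul_one, f]
    rw [← h1]
    congr 1
    simp [neg_div, inv_neg]
  have hT : SlashAction.map (0 : ℤ) ModularGroup.T f = f := by
    funext τ
    rw [ModularForm.SL_slash_apply, UpperHalfPlane.modular_T_smul]
    simp only [neg_zero, zpow_zero, mul_one, f]
    rw [← hi.1 τ τ.2]
    congr 1
    simp [add_comm]
  have hbd : UpperHalfPlane.IsBoundedAtImInfty f := by
    have h1 : Tendsto (fun τ : UpperHalfPlane => (τ : ℂ)) UpperHalfPlane.atImInfty atI :=
      UpperHalfPlane.tendsto_coe_atImInfty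
    have := IsBigO.comp_tendsto hb h1
    refine this.congr_right fun τ => ?_
    simp [gr]
  let M : ModularForm (Matrix.SpecialLinearGroup.mapGL ℝ).range 0 :=
    { toFun := f
      slash_action_eq' := by
        intro A hA
        obtain ⟨A, rfl⟩ := hA
        exact SlashInvariantForm.slash_action_generators_SL2Z hS hT A
      holo' := by
        rw [UpperHalfPlane.mdifferentiable_iff]
        refine hd.congr fun z hz => ?_
        simp [f, UpperHalfPlane.ofComplex_apply_of_im_pos hz]
      bdd_at_cusps' := by
        intro c hc
        rw [OnePoint.isBoundedAt_iff_forall_SL2Z hc]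
        intro γ _
        rw [SlashInvariantForm.slash_action_generators_SL2Z hS hT]
        exact hbd }
  obtain ⟨c, hc⟩ := ModularFormClass.levelOne_weight_zero_const M
  exact ⟨c, fun τ hτ => congrFun hc ⟨τ, hτ⟩⟩

open Classical in
/-- A bounded function of period one has a limit at `i∞`, approached at the rate `|q|`. -/
lemma tendsto_of_bounded {F : ℂ → ℂ} (hd : DifferentiableOn ℂ F HH)
    (hT : ∀ τ ∈ HH, F (τ + 1) = F τ) (hb : Og 0 F) :
    ∃ c, Tendsto F atI (𝓝 c) ∧ Og (-1) (fun τ => F τ - c) := by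
  let H : ℂ → ℂ := fun τ => if τ ∈ HH then F τ else 0
  have hHF : H =ᶠ[atI] F := atI_pos.mono fun τ h => if_pos h
  have hper : Function.Periodic H (1 : ℝ) := by
    intro τ
    have h1 : (τ + (1 : ℝ) ∈ HH) ↔ τ ∈ HH := by simp [HH]
    simp only [H, h1]
    split_ifs with h
    · simpa using hT τ h
    · rfl
  have hhol : ∀ᶠ z in comap Complex.im atTop, DifferentiableAt ℂ H z := by
    refine (atI_pos : ∀ᶠ τ in comap Complex.im atTop, 0 < τ.im).mono fun z hz => ?_
    have hmem : HH ∈ 𝓝 z := HH_open.mem_nhds hz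
    refine (hd.differentiableAt hmem).congr_of_eventuallyEq ?_
    filter_upwards [hmem] with w hw
    exact if_pos hw
  have hbd : BoundedAtFilter (comap Complex.im atTop) H := by
    have h2 : Og 0 H := hb.congr hHF.symm
    refine IsBigO.congr_right h2 fun τ => by simp [gr]
  have h1 := Function.Periodic.tendsto_at_I_inf one_pos hper hhol hbd
  have h2 := Function.Periodic.exp_decay_sub_of_bounded_at_inf one_pos hper hhol hbd
  refine ⟨_, Tendsto.congr' hHF h1, ?_⟩
  have h3 : Og (-1) (fun τ => H τ - Function.Periodic.cuspFunction 1 H 0) := by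
    refine IsBigO.congr_right h2 fun τ => by simp [gr]
  exact h3.congr (hHF.mono fun τ h => by simp only [h])

lemma qp_nat_T (n : ℕ) (τ : ℂ) : qp (n : ℝ) (τ + 1) = qp n τ := by
  have := ee_int n
  rw [qp, qp, mul_add, ee_add, mul_one]
  push_cast at this ⊢
  rw [this, mul_one]

/-- A level one modular function, holomorphic on the upper half-plane and having an integral
expansion at the cusp, is an integral polynomial in the modular invariant. -/
lemma eq_poly_jj (n : ℕ) : ∀ {F : ℂ → ℂ}, F ∈ HA → ModInv F → Og n F →
    ∃ p : Polynomial R, ∀ τ ∈ HH, F τ = Polynomial.aeval (jj τ) p := by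
  induction n with
  | zero =>
    intro F hF hi hg
    obtain ⟨c, hc⟩ := const_of_bounded hF.2 hi (by simpa using hg)
    have hlim : Tendsto F atI (𝓝 c) := by
      refine tendsto_const_nhds.congr' ?_
      filter_upwards [atI_pos] with τ hτ
      exact (hc τ hτ).symm
    exact ⟨Polynomial.C ⟨c, hF.1.limit hlim⟩, fun τ hτ => by rw [hc τ hτ, Polynomial.aeval_C]; rfl⟩
  | succ n ih =>
    intro F hF hi hg
    have hq : qp ((n + 1 : ℕ) : ℝ) ∈ HA :=
      ⟨.of_PP (by have := qp_mem_PP ((n + 1 : ℕ) : ℚ); push_cast at this ⊢; exact this), by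
        have hd := ee_differentiable
        unfold qp
        fun_prop⟩
    have hqF := HA.mul_mem hF hq
    have hb : Og 0 (F * qp ((n + 1 : ℕ) : ℝ)) := (hg.mul (Og_qp _)).mono (by simp)
    obtain ⟨c, hc, hdec⟩ := tendsto_of_bounded hqF.2
      (fun τ hτ => by rw [Pi.mul_apply, Pi.mul_apply, qp_nat_T, hi.1 τ hτ]) hb
    have hcR := hqF.1.limit hc
    obtain ⟨_, _, _, E, hE, ⟨ε, hε, gE⟩, e⟩ := jj_lead
    have hF' : F - (fun _ => c) * jj ^ (n + 1) ∈ HA :=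
      HA.sub_mem hF (HA.mul_mem (HA.algebraMap_mem ⟨c, hcR⟩) (HA.pow_mem jj_mem _))
    have hi' : ModInv (F - (fun _ => c) * jj ^ (n + 1)) :=
      ⟨fun τ hτ => by simp [hi.1 τ hτ, jj_T], fun τ hτ => by
        have h1 := hi.2 τ hτ
        have h2 := jj_S hτ
        simp only [Pi.sub_apply, Pi.mul_apply, Pi.pow_apply, h1, h2]⟩
    -- multiplied by `q^(n+1)`, the difference is periodic and tends to zero
    have hb' : Og 0 ((F - (fun _ => c) * jj ^ (n + 1)) * qp ((n + 1 : ℕ) : ℝ)) := by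
      rw [sub_mul]
      refine hb.sub ?_
      have := ((Og_const c).mul (jj_lead.growth.pow (n + 1))).mul (Og_qp ((n + 1 : ℕ) : ℝ))
      exact this.mono (by simp)
    obtain ⟨d, hd, hdd⟩ := tendsto_of_bounded (HA.mul_mem hF' hq).2
      (fun τ hτ => by rw [Pi.mul_apply, Pi.mul_apply, qp_nat_T, hi'.1 τ hτ]) hb'
    have hd0 : d = 0 := by
      have hl : Tendsto (fun τ => (jj τ * qp (-((-1 : ℚ) : ℝ)) τ) ^ (n + 1)) atI (𝓝 (1 ^ (n + 1))) :=
        jj_lead.limit.pow (n + 1)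
      have h2 := hc.sub (hl.const_mul c)
      rw [one_pow, mul_one, sub_self] at h2
      refine tendsto_nhds_unique hd (h2.congr fun τ => ?_)
      have : qp ((n + 1 : ℕ) : ℝ) τ = qp (-((-1 : ℚ) : ℝ)) τ ^ (n + 1) := by
        rw [qp, qp, ← ee_nat_mul]; push_cast; ring_nf
      simp only [Pi.sub_apply, Pi.mul_apply, Pi.pow_apply, this]
      ring
    have hg' : Og n (F - (fun _ => c) * jj ^ (n + 1)) := by
      have h3 := hdd.mul (Og_qp (-((n + 1 : ℕ) : ℝ)))
      refine (h3.mono (B := n) (by push_cast; linarith)).congr (Eventually.of_forall fun τ => ?_)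
      have h4 : qp ((n + 1 : ℕ) : ℝ) τ * qp (-((n + 1 : ℕ) : ℝ)) τ = 1 := by
        rw [← qp_add]; simp
      simp only [Pi.mul_apply, hd0, sub_zero]
      rw [mul_assoc, h4, mul_one]
    obtain ⟨p, hp⟩ := ih hF' hi' hg'
    refine ⟨p + Polynomial.C ⟨c, hcR⟩ * Polynomial.X ^ (n + 1), fun τ hτ => ?_⟩
    have := hp τ hτ
    rw [map_add, ← this, map_mul, Polynomial.aeval_C, map_pow, Polynomial.aeval_X]
    simp only [Pi.sub_apply, Pi.mul_apply, Pi.pow_apply]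
    change _ = _ + c * _
    ring

lemma exists_poly_jj {F : ℂ → ℂ} (h : F ∈ HA) (hi : ModInv F) :
    ∃ p : Polynomial R, ∀ τ ∈ HH, F τ = Polynomial.aeval (jj τ) p := by
  obtain ⟨A, _, hA⟩ := h.1.growth
  obtain ⟨n, hn⟩ := exists_nat_ge A
  exact eq_poly_jj n h hi (hA.mono hn)

/-- If a level one modular function with a unit as leading coefficient vanishes at `τ`, then the
modular invariant of `τ` is an algebraic integer. -/
lemma jj_integral_of_zero {F : ℂ → ℂ} (h : F ∈ HA) (hi : ModInv F) {c : ℂ} {x : ℚ}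
    (hl : UnitLead c x F) {τ : ℂ} (hτ : τ ∈ HH) (h0 : F τ = 0) : jj τ ∈ R := by
  obtain ⟨p, hp⟩ := exists_poly_jj h hi
  have hjq : Tendsto (fun τ => jj τ * qp 1 τ) atI (𝓝 1) := by
    simpa using jj_lead.limit
  have hlim : Tendsto (fun τ => F τ * qp p.natDegree τ) atI (𝓝 (p.leadingCoeff : ℂ)) := by
    have h1 : Tendsto (fun τ => ∑ i ∈ Finset.range (p.natDegree + 1),
        (p.coeff i : ℂ) * (jj τ * qp 1 τ) ^ i * qp ((p.natDegree - i : ℕ) : ℝ) τ) atI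
        (𝓝 (∑ i ∈ Finset.range (p.natDegree + 1), if i = p.natDegree then (p.coeff i : ℂ) else 0)) := by
      refine tendsto_finsetSum _ fun i hi => ?_
      have h2 := (hjq.pow i).const_mul (p.coeff i : ℂ)
      split_ifs with hin
      · subst hin
        simpa using h2
      · have hlt : 0 < p.natDegree - i := by
          have := Finset.mem_range.1 hi; omega
        simpa using h2.mul (qp_tendsto (x := ((p.natDegree - i : ℕ) : ℝ)) (by exact_mod_cast hlt))
    rw [Finset.sum_ite_eq' _ p.natDegree, if_pos (by simp)] at h1
    refine h1.congr' ?_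
    filter_upwards [atI_pos] with τ hτ
    rw [hp τ hτ, Polynomial.aeval_eq_sum_range, Finset.sum_mul]
    refine Finset.sum_congr rfl fun i hi => ?_
    have e1 : qp p.natDegree τ = qp 1 τ ^ i * qp ((p.natDegree - i : ℕ) : ℝ) τ := by
      have h5 : qp 1 τ ^ i = qp i τ := by
        rw [qp, qp, ← ee_nat_mul]; push_cast; ring_nf
      rw [h5, ← qp_add]
      congr 1
      have := Finset.mem_range.1 hi
      rw [Nat.cast_sub (by omega)]; ring
    rw [e1, Algebra.smul_def]
    change _ = ((p.coeff i : R) : ℂ) * _ * _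
    ring
  have hp0 : p ≠ 0 := by
    rintro rfl
    have h1 : Tendsto (fun τ => F τ * qp (-x : ℝ) τ) atI (𝓝 0) := by
      refine tendsto_const_nhds.congr' ?_
      filter_upwards [atI_pos] with τ hτ
      simp [hp τ hτ]
    exact hl.1 (tendsto_nhds_unique hl.limit h1)
  have hlc : (p.leadingCoeff : ℂ) ≠ 0 := by
    simpa using hp0
  have hcR := hl.2.2.1
  -- the two leading terms of `F` agree
  have hx : (p.natDegree : ℝ) = -x := by
    rcases lt_trichotomy (p.natDegree : ℝ) (-x) with h1 | h1 | h1
    · have h2 := hlim.mul (qp_tendsto (x := -x - p.natDegree) (by linarith))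
      refine absurd (tendsto_nhds_unique hl.limit (h2.congr fun τ => ?_)) (by simpa using hl.1)
      rw [mul_assoc, ← qp_add]; congr 2; ring
    · exact h1
    · have h2 := hl.limit.mul (qp_tendsto (x := p.natDegree + x) (by linarith))
      refine absurd (tendsto_nhds_unique hlim (h2.congr fun τ => ?_)) (by simpa using hlc)
      rw [mul_assoc, ← qp_add]; congr 2; ring
  have hc : (p.leadingCoeff : ℂ) = c := by
    refine tendsto_nhds_unique hlim ?_
    rw [hx]; exact hl.limit
  let d : R := ⟨c⁻¹, hcR⟩
  have hmul : d * p.leadingCoeff = 1 := by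
    apply Subtype.ext
    change c⁻¹ * (p.leadingCoeff : ℂ) = 1
    rw [hc, inv_mul_cancel₀ hl.1]
  have hmonic : (Polynomial.C d * p).Monic := Polynomial.monic_C_mul_of_mul_leadingCoeff_eq_one hmul
  have hint : IsIntegral R (jj τ) := ⟨_, hmonic, by
    rw [← Polynomial.aeval_def, map_mul, ← hp τ hτ, h0, mul_zero]⟩
  exact isIntegral_trans (R := ℤ) (A := R) _ hint

/-! ### Matrices, Möbius transformations and finite orbits -/

/-- The modular group. -/
abbrev SL := Matrix.SpecialLinearGroup (Fin 2) ℤ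

/-- Integral two by two matrices. -/
abbrev M2 := Matrix (Fin 2) (Fin 2) ℤ

/-- The denominator `cτ + d` of the Möbius transformation of a matrix. -/
noncomputable def den (C : M2) (τ : ℂ) : ℂ := C 1 0 * τ + C 1 1

/-- The Möbius transformation `(aτ + b) / (cτ + d)` of a matrix. -/
noncomputable def mob (C : M2) (τ : ℂ) : ℂ := (C 0 0 * τ + C 0 1) / den C τ

lemma den_mul (A B : M2) {τ : ℂ} (h : den B τ ≠ 0) :
    den (A * B) τ = den A (mob B τ) * den B τ := by
  unfold mob den at *
  simp only [Matrix.mul_apply, Fin.sum_univ_two]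
  push_cast
  field_simp
  ring

lemma mob_mul (A B : M2) {τ : ℂ} (h : den B τ ≠ 0) : mob (A * B) τ = mob A (mob B τ) := by
  have h1 := den_mul A B h
  rw [mob, h1, mob, div_mul_eq_div_div_swap]
  congr 1
  rw [div_eq_iff h]
  simp only [Matrix.mul_apply, Fin.sum_univ_two]
  push_cast
  field_simp
  rw [den]
  ring

lemma det_eq (C : M2) : C.det = C 0 0 * C 1 1 - C 0 1 * C 1 0 := Matrix.det_fin_two C

lemma den_ne_zero {C : M2} (hC : C.det ≠ 0) {τ : ℂ} (h : τ ∈ HH) : den C τ ≠ 0 := by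
  intro h0
  have h1 := congrArg Complex.im h0
  simp [den] at h1
  have h2 : C 1 0 = 0 := h1.resolve_right (ne_of_gt h)
  rw [den, h2] at h0
  simp at h0
  exact hC (by rw [det_eq, h0, h2]; ring)

lemma mob_mem {C : M2} (hC : 0 < C.det) {τ : ℂ} (h : τ ∈ HH) : mob C τ ∈ HH := by
  have hd := den_ne_zero hC.ne' h
  have h1 : (mob C τ).im = C.det * τ.im / Complex.normSq (den C τ) := by
    rw [mob, Complex.div_im, det_eq]
    simp [den]
    ring
  change 0 < (mob C τ).im
  rw [h1]
  have h2 : (0 : ℝ) < C.det := by exact_mod_cast hC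
  have h3 : 0 < τ.im := h
  have h4 := Complex.normSq_pos.2 hd
  positivity

lemma SL_det (γ : SL) : (γ : M2).det = 1 := γ.2

lemma SL_den (γ : SL) {τ : ℂ} (h : τ ∈ HH) : den γ τ ≠ 0 := den_ne_zero (by simp) h

lemma SL_mob (γ : SL) {τ : ℂ} (h : τ ∈ HH) : mob γ τ ∈ HH := mob_mem (by simp) h

lemma mob_one (τ : ℂ) : mob 1 τ = τ := by simp [mob, den]

lemma den_one (τ : ℂ) : den 1 τ = 1 := by simp [den]

lemma mob_T (τ : ℂ) : mob (ModularGroup.T : SL) τ = τ + 1 := by simp [mob, den, ModularGroup.T]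

lemma mob_S (τ : ℂ) : mob (ModularGroup.S : SL) τ = -1 / τ := by simp [mob, den, ModularGroup.S]

lemma den_T (τ : ℂ) : den (ModularGroup.T : SL) τ = 1 := by simp [den, ModularGroup.T]

lemma den_S (τ : ℂ) : den (ModularGroup.S : SL) τ = τ := by simp [den, ModularGroup.S]

lemma SL_induction {p : SL → Prop} (hS : p ModularGroup.S) (hT : p ModularGroup.T) (h1 : p 1)
    (hm : ∀ a b, p a → p b → p (a * b)) (hi : ∀ a, p a → p a⁻¹) (γ : SL) : p γ := by
  have : γ ∈ Subgroup.closure ({ModularGroup.S, ModularGroup.T} : Set SL) := by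
    rw [SpecialLinearGroup.SL2Z_generators]; trivial
  induction this using Subgroup.closure_induction with
  | mem x hx => rcases hx with rfl | rfl <;> assumption
  | one => exact h1
  | mul x y _ _ hx hy => exact hm _ _ hx hy
  | inv x _ hx => exact hi _ hx

lemma mob_mob_inv (γ : SL) {τ : ℂ} (h : τ ∈ HH) : mob γ (mob (γ⁻¹ : SL) τ) = τ := by
  rw [← mob_mul _ _ (SL_den _ h), ← Matrix.SpecialLinearGroup.coe_mul, mul_inv_cancel,
    Matrix.SpecialLinearGroup.coe_one, mob_one]

lemma den_den_inv (γ : SL) {τ : ℂ} (h : τ ∈ HH) :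
    den γ (mob (γ⁻¹ : SL) τ) * den (γ⁻¹ : SL) τ = 1 := by
  rw [← den_mul _ _ (SL_den _ h), ← Matrix.SpecialLinearGroup.coe_mul, mul_inv_cancel,
    Matrix.SpecialLinearGroup.coe_one, den_one]

lemma ModInv.mob {F : ℂ → ℂ} (hF : ModInv F) (γ : SL) : ∀ {τ : ℂ}, τ ∈ HH → F (mob γ τ) = F τ := by
  induction γ using SL_induction with
  | hS => intro τ h; rw [mob_S]; exact hF.2 τ h
  | hT => intro τ h; rw [mob_T]; exact hF.1 τ h
  | h1 => intro τ h; rw [Matrix.SpecialLinearGroup.coe_one, mob_one]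
  | hm a b ha hb =>
    intro τ h
    rw [Matrix.SpecialLinearGroup.coe_mul, mob_mul _ _ (SL_den _ h), ha (SL_mob _ h), hb h]
  | hi a ha =>
    intro τ h
    rw [← ha (SL_mob _ h), mob_mob_inv a h]

lemma Del_mob (γ : SL) : ∀ {τ : ℂ}, τ ∈ HH → Del (mob γ τ) = den γ τ ^ 12 * Del τ := by
  induction γ using SL_induction with
  | hS => intro τ h; rw [mob_S, den_S]; exact Del_S h
  | hT => intro τ h; rw [mob_T, den_T, Del_T]; simp
  | h1 => intro τ h; rw [Matrix.SpecialLinearGroup.coe_one, mob_one, den_one]; simp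
  | hm a b ha hb =>
    intro τ h
    rw [Matrix.SpecialLinearGroup.coe_mul, mob_mul _ _ (SL_den _ h), den_mul _ _ (SL_den _ h),
      ha (SL_mob _ h), hb h]
    ring
  | hi a ha =>
    intro τ h
    have h1 := ha (SL_mob a⁻¹ h)
    have h2 := den_den_inv a h
    rw [mob_mob_inv a h] at h1
    rw [h1, ← mul_assoc, ← mul_pow, mul_comm (den _ _), h2]
    simp

/-- Every integral matrix of positive determinant is brought to upper triangular form by the modular
group; the first diagonal entry is the content of the first column. -/
lemma exists_upper {C : M2} (hC : 0 < C.det) : ∃ γ : SL, ∃ a b d : ℤ, 0 < a ∧ 0 < d ∧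
    a * d = C.det ∧ a = Int.gcd (C 0 0) (C 1 0) ∧ (γ : M2) * C = !![a, b; 0, d] := by
  obtain ⟨g, hg⟩ : ∃ g : ℤ, g = Int.gcd (C 0 0) (C 1 0) := ⟨_, rfl⟩
  have hg0 : 0 < g := by
    rw [hg]
    rcases (Int.natCast_nonneg (Int.gcd (C 0 0) (C 1 0))).lt_or_eq with h | h
    · exact h
    · have h2 : Int.gcd (C 0 0) (C 1 0) = 0 := by exact_mod_cast h.symm
      rw [Int.gcd_eq_zero_iff] at h2
      rw [det_eq, h2.1, h2.2] at hC
      simp at hC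
  obtain ⟨p, hp⟩ : g ∣ C 0 0 := hg ▸ Int.gcd_dvd_left ..
  obtain ⟨r, hr⟩ : g ∣ C 1 0 := hg ▸ Int.gcd_dvd_right ..
  have hb : g = C 0 0 * Int.gcdA (C 0 0) (C 1 0) + C 1 0 * Int.gcdB (C 0 0) (C 1 0) :=
    hg ▸ Int.gcd_eq_gcd_ab _ _
  set x := Int.gcdA (C 0 0) (C 1 0)
  set y := Int.gcdB (C 0 0) (C 1 0)
  have h1 : p * x + r * y = 1 := by
    have : g * (p * x + r * y) = g * 1 := by linear_combination -hb - x * hp - y * hr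
    exact mul_left_cancel₀ hg0.ne' this
  have hdet : g * (p * C 1 1 - r * C 0 1) = C.det := by rw [det_eq, hp, hr]; ring
  refine ⟨⟨!![x, y; -r, p], by rw [Matrix.det_fin_two_of]; linarith⟩, g, x * C 0 1 + y * C 1 1,
    p * C 1 1 - r * C 0 1, hg0, ?_, hdet, hg, ?_⟩
  · rw [← hdet] at hC
    exact pos_of_mul_pos_right hC hg0.le
  · ext i j
    fin_cases i <;> fin_cases j <;> simp [Matrix.mul_apply, Fin.sum_univ_two]
    · rw [hp, hr]; linear_combination g * h1
    · rw [hp, hr]; ring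
    · ring

/-- A family of functions permuted by the modular group through a finite quotient. -/
structure Fam (M : ℕ) (F : SL → ℂ → ℂ) : Prop where
  mem : ∀ γ, F γ ∈ HA
  hT : ∀ γ, ∀ τ ∈ HH, F γ (τ + 1) = F (γ * ModularGroup.T) τ
  hS : ∀ γ, ∀ τ ∈ HH, F γ (-1 / τ) = F (γ * ModularGroup.S) τ
  hM : ∀ δ ∈ CongruenceSubgroup.Gamma M, ∀ γ, ∀ τ ∈ HH, F (δ * γ) τ = F γ τ

instance (M : ℕ) : (CongruenceSubgroup.Gamma M).Normal := CongruenceSubgroup.Gamma_normal M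

noncomputable instance (M : ℕ) [NeZero M] : Fintype (SL ⧸ CongruenceSubgroup.Gamma M) :=
  Fintype.ofFinite _

lemma Fam.out {M : ℕ} {F : SL → ℂ → ℂ} (h : Fam M F) (γ : SL) {τ : ℂ} (hτ : τ ∈ HH) :
    F (Quotient.out (γ : SL ⧸ CongruenceSubgroup.Gamma M)) τ = F γ τ := by
  set γ' := Quotient.out (γ : SL ⧸ CongruenceSubgroup.Gamma M) with hγ'
  have h1 : (γ' : SL ⧸ CongruenceSubgroup.Gamma M) = γ := QuotientGroup.out_eq' _
  have h2 := QuotientGroup.eq.1 h1.symm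
  have h3 := (CongruenceSubgroup.Gamma_normal M).mem_comm h2
  rw [← h.hM _ h3 γ τ hτ, inv_mul_cancel_right]

lemma Fam.prod_T {M : ℕ} [NeZero M] {F : SL → ℂ → ℂ} (h : Fam M F) {X : Type*} [CommMonoid X]
    (φ : ℂ → X) {τ : ℂ} (hτ : τ ∈ HH) :
    ∏ q : SL ⧸ CongruenceSubgroup.Gamma M, φ (F q.out (τ + 1)) =
      ∏ q : SL ⧸ CongruenceSubgroup.Gamma M, φ (F q.out τ) := by
  refine Fintype.prod_equiv (Equiv.mulRight ((ModularGroup.T : SL) : SL ⧸ CongruenceSubgroup.Gamma M))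
    _ _ fun q => ?_
  have : q * ((ModularGroup.T : SL) : SL ⧸ CongruenceSubgroup.Gamma M) =
      ((q.out * ModularGroup.T : SL) : SL ⧸ CongruenceSubgroup.Gamma M) := by
    rw [QuotientGroup.mk_mul, QuotientGroup.out_eq']
  simp only [Equiv.coe_mulRight]
  rw [this, h.out _ hτ, h.hT _ τ hτ]

lemma Fam.prod_S {M : ℕ} [NeZero M] {F : SL → ℂ → ℂ} (h : Fam M F) {X : Type*} [CommMonoid X]
    (φ : ℂ → X) {τ : ℂ} (hτ : τ ∈ HH) :
    ∏ q : SL ⧸ CongruenceSubgroup.Gamma M, φ (F q.out (-1 / τ)) =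
      ∏ q : SL ⧸ CongruenceSubgroup.Gamma M, φ (F q.out τ) := by
  refine Fintype.prod_equiv (Equiv.mulRight ((ModularGroup.S : SL) : SL ⧸ CongruenceSubgroup.Gamma M))
    _ _ fun q => ?_
  have : q * ((ModularGroup.S : SL) : SL ⧸ CongruenceSubgroup.Gamma M) =
      ((q.out * ModularGroup.S : SL) : SL ⧸ CongruenceSubgroup.Gamma M) := by
    rw [QuotientGroup.mk_mul, QuotientGroup.out_eq']
  simp only [Equiv.coe_mulRight]
  rw [this, h.out _ hτ, h.hS _ τ hτ]

lemma mem_R_of_monic {p : Polynomial ℂ} (hp : p.Monic) (hc : ∀ n, p.coeff n ∈ R) {x : ℂ}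
    (hx : p.eval x = 0) : x ∈ R := by
  have hl : p ∈ Polynomial.lifts (algebraMap R ℂ) := by
    rw [Polynomial.lifts_iff_coeff_lifts]
    exact fun n => ⟨⟨_, hc n⟩, rfl⟩
  obtain ⟨q, hq, _, hm⟩ := Polynomial.lifts_and_natDegree_eq_and_monic hl hp
  have : IsIntegral R x := ⟨q, hm, by rw [← Polynomial.eval_map, hq, hx]⟩
  exact isIntegral_trans (R := ℤ) (A := R) _ this

lemma coeff_mem_R {τ : ℂ} (hj : jj τ ∈ R) (p : Polynomial R) : Polynomial.aeval (jj τ) p ∈ R := by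
  rw [Polynomial.aeval_eq_sum_range]
  exact R.sum_mem fun i _ => by
    rw [Algebra.smul_def]
    exact R.mul_mem (p.coeff i).2 (R.pow_mem hj i)

/-- Members of a finite orbit of functions with integral expansions take algebraic integer values
where the modular invariant does. -/
lemma Fam.integral {M : ℕ} [NeZero M] {F : SL → ℂ → ℂ} (h : Fam M F) {τ : ℂ} (hτ : τ ∈ HH)
    (hj : jj τ ∈ R) (γ : SL) : F γ τ ∈ R := by
  let f : (SL ⧸ CongruenceSubgroup.Gamma M) → HA := fun q => ⟨F q.out, h.mem _⟩
  let Q : Polynomial HA := ∏ q, (Polynomial.X - Polynomial.C (f q))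
  let ev : ℂ → HA →+* ℂ := fun τ => (Pi.evalRingHom (fun _ : ℂ => ℂ) τ).comp HA.val.toRingHom
  have hev : ∀ (τ : ℂ) (a : HA), ev τ a = (a : ℂ → ℂ) τ := fun _ _ => rfl
  have hmap : ∀ τ, Q.map (ev τ) =
      ∏ q : SL ⧸ CongruenceSubgroup.Gamma M, (Polynomial.X - Polynomial.C (F q.out τ)) := by
    intro τ
    rw [Polynomial.map_prod]
    refine Finset.prod_congr rfl fun q _ => ?_
    simp [hev, f]
  have hcoef : ∀ n, (Q.map (ev τ)).coeff n ∈ R := by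
    intro n
    have hi : ModInv (Q.coeff n : ℂ → ℂ) := by
      refine ⟨fun σ hσ => ?_, fun σ hσ => ?_⟩
      · rw [← hev, ← hev, ← Polynomial.coeff_map, ← Polynomial.coeff_map, hmap, hmap,
          h.prod_T (fun z => Polynomial.X - Polynomial.C z) hσ]
      · rw [← hev, ← hev, ← Polynomial.coeff_map, ← Polynomial.coeff_map, hmap, hmap,
          h.prod_S (fun z => Polynomial.X - Polynomial.C z) hσ]
    obtain ⟨p, hp⟩ := exists_poly_jj (Q.coeff n).2 hi
    rw [Polynomial.coeff_map, hev, hp τ hτ]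
    exact coeff_mem_R hj p
  refine mem_R_of_monic ?_ hcoef ?_
  · rw [hmap]; exact Polynomial.monic_prod_of_monic _ _ fun q _ => Polynomial.monic_X_sub_C _
  · rw [hmap, Polynomial.eval_prod]
    refine Finset.prod_eq_zero (Finset.mem_univ (γ : SL ⧸ CongruenceSubgroup.Gamma M)) ?_
    simp [h.out γ hτ]

/-! ### Integrality of singular moduli -/

/-- Conjugation by an integral matrix carries a suitable principal congruence subgroup into the modular
group. -/
lemma conj_SL {C : M2} (hC : 0 < C.det) {M : ℕ} (hM : C.det ∣ M) {δ : SL}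
    (hδ : δ ∈ CongruenceSubgroup.Gamma M) : ∃ δ' : SL, C * (δ : M2) = δ' * C := by
  obtain ⟨h1, h2, h3, h4⟩ := CongruenceSubgroup.Gamma_mem.1 hδ
  have key : ∀ x y : ℤ, (x : ZMod M) = (y : ZMod M) → C.det ∣ x - y := fun x y h =>
    hM.trans ((ZMod.intCast_eq_intCast_iff_dvd_sub y x M).1 h.symm)
  obtain ⟨e1, k1⟩ := key (δ 0 0) 1 (by simpa using h1)
  obtain ⟨e2, k2⟩ := key (δ 0 1) 0 (by simpa using h2)
  obtain ⟨e3, k3⟩ := key (δ 1 0) 0 (by simpa using h3)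
  obtain ⟨e4, k4⟩ := key (δ 1 1) 1 (by simpa using h4)
  have hE : (δ : M2) = 1 + C.det • !![e1, e2; e3, e4] := by
    ext i j
    fin_cases i <;> fin_cases j <;> simp <;> linarith
  have h : C * (δ : M2) = (1 + C * !![e1, e2; e3, e4] * C.adjugate) * C := by
    rw [hE, mul_add, add_mul, mul_assoc _ C.adjugate, Matrix.adjugate_mul, Matrix.mul_smul, Matrix.mul_smul,
      mul_one, mul_one, one_mul]
  refine ⟨⟨1 + C * !![e1, e2; e3, e4] * C.adjugate, ?_⟩, h⟩
  have := congrArg Matrix.det h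
  rw [Matrix.det_mul, Matrix.det_mul, SL_det, mul_one] at this
  exact mul_right_cancel₀ hC.ne' (by rw [one_mul, ← this])

lemma mob_upper (a b d : ℤ) (τ : ℂ) :
    mob !![a, b; 0, d] τ = ((a / d : ℚ) : ℂ) * τ + ((b / d : ℚ) : ℂ) := by
  simp [mob, den]; ring

lemma mob_diff {C : M2} (hC : 0 < C.det) : DifferentiableOn ℂ (mob C) HH := by
  intro τ h
  have : den C τ ≠ 0 := den_ne_zero hC.ne' h
  unfold mob den at *
  refine DifferentiableAt.differentiableWithinAt ?_
  fun_prop (disch := assumption)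

lemma SL_mul_mob (γ : SL) {C : M2} (hC : 0 < C.det) {τ : ℂ} (h : τ ∈ HH) :
    mob ((γ : M2) * C) τ = mob γ (mob C τ) := mob_mul _ _ (den_ne_zero hC.ne' h)

lemma mob_mul_SL (γ : SL) (C : M2) {τ : ℂ} (h : τ ∈ HH) :
    mob (C * γ) τ = mob C (mob γ τ) := mob_mul _ _ (SL_den γ h)

lemma atI_HH {p : ℂ → Prop} (h : ∀ τ ∈ HH, p τ) : ∀ᶠ τ in atI, p τ := atI_pos.mono fun τ hτ => h τ hτ

lemma jj_upper {C : M2} (hC : 0 < C.det) : ∃ a b d : ℤ, 0 < a ∧ 0 < d ∧ a * d = C.det ∧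
    ∀ τ ∈ HH, jj (mob C τ) = jj (((a / d : ℚ) : ℂ) * τ + ((b / d : ℚ) : ℂ)) := by
  obtain ⟨γ, a, b, d, ha, hd, had, _, hγ⟩ := exists_upper hC
  refine ⟨a, b, d, ha, hd, had, fun τ h => ?_⟩
  rw [← mob_upper, ← hγ, SL_mul_mob γ hC h, jj_inv.mob γ (mob_mem hC h)]

lemma jj_comp_diff {C : M2} (hC : 0 < C.det) : DifferentiableOn ℂ (fun τ => jj (mob C τ)) HH :=
  jj_mem.2.comp (mob_diff hC) fun _ h => mob_mem hC h

/-- The two terms have poles of different orders at `i∞` when the determinant is not a square. -/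
lemma jj_sub_lead {C : M2} (hC : 0 < C.det) (hs : ¬ IsSquare C.det) :
    ∃ c x, UnitLead c x (fun τ => jj τ - jj (mob C τ)) := by
  obtain ⟨a, b, d, ha, hd, had, h⟩ := jj_upper hC
  have hne : a ≠ d := fun e => hs ⟨a, by rw [← had, e]⟩
  have had' : (0 : ℚ) < a / d := by positivity
  have l := (jj_lead.comp had' (b / d)).congr (atI_HH fun τ hτ => (h τ hτ).symm)
  have e1 : (fun τ => jj τ - jj (mob C τ)) = jj + -(fun τ => jj (mob C τ)) := by
    ext; simp [sub_eq_add_neg]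
  have hd' : (0 : ℚ) < d := by exact_mod_cast hd
  rcases lt_or_gt_of_ne hne with hlt | hlt
  · have : (a / d : ℚ) < 1 := by rw [div_lt_one hd']; exact_mod_cast hlt
    refine ⟨_, _, e1 ▸ jj_lead.add l.neg.intExp (y := ((-1 * (a / d) : ℚ) : ℝ)) ?_ l.neg.growth⟩
    exact Rat.cast_lt.2 (by linarith)
  · have : 1 < (a / d : ℚ) := by rw [one_lt_div hd']; exact_mod_cast hlt
    refine ⟨_, _, (e1.trans (add_comm _ _)) ▸ l.neg.add jj_lead.intExp (y := ((-1 : ℚ) : ℝ)) ?_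
      jj_lead.growth⟩
    exact Rat.cast_lt.2 (by linarith)

lemma UnitLead.prod {ι : Type*} (s : Finset ι) {F : ι → ℂ → ℂ}
    (h : ∀ i ∈ s, ∃ c x, UnitLead c x (F i)) : ∃ c x, UnitLead c x (∏ i ∈ s, F i) := by
  classical
  induction s using Finset.induction_on with
  | empty => exact ⟨1, 0, by simpa using UnitLead.one⟩
  | insert i s hi ih =>
    obtain ⟨c, x, h1⟩ := h i (Finset.mem_insert_self _ _)
    obtain ⟨d, y, h2⟩ := ih fun j hj => h j (Finset.mem_insert_of_mem hj)
    exact ⟨_, _, by rw [Finset.prod_insert hi]; exact h1.mul h2⟩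

/-- The conjugates of `jj - jj ∘ A` under the modular group. -/
lemma fam_jj {A : M2} (hA : 0 < A.det) {M : ℕ} (hM : A.det ∣ M) (hs : ¬ IsSquare A.det) :
    Fam M (fun γ τ => jj τ - jj (mob (A * (γ : M2)) τ)) := by
  have hd : ∀ γ : SL, (A * (γ : M2)).det = A.det := fun γ => by
    rw [Matrix.det_mul, SL_det, mul_one]
  have hp : ∀ γ : SL, 0 < (A * (γ : M2)).det := fun γ => by rw [hd]; exact hA
  refine ⟨fun γ => ?_, fun γ τ h => ?_, fun γ τ h => ?_, fun δ hδ γ τ h => ?_⟩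
  · obtain ⟨c, x, hl⟩ := jj_sub_lead (hp γ) (by rwa [hd])
    exact ⟨hl.intExp, jj_mem.2.sub (jj_comp_diff (hp γ))⟩
  · rw [jj_T, Matrix.SpecialLinearGroup.coe_mul, ← mul_assoc, mob_mul_SL _ _ h, mob_T]
  · rw [jj_S h, Matrix.SpecialLinearGroup.coe_mul, ← mul_assoc, mob_mul_SL _ _ h, mob_S]
  · obtain ⟨δ', e⟩ := conj_SL hA hM hδ
    rw [Matrix.SpecialLinearGroup.coe_mul, ← mul_assoc, e, mul_assoc, SL_mul_mob δ' (hp γ) h,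
      jj_inv.mob δ' (mob_mem (hp γ) h)]

/-- Singular moduli are algebraic integers: at a fixed point of a matrix whose determinant is not a
square, the modular invariant is a root of the corresponding modular polynomial on the diagonal. -/
lemma jj_integral {A : M2} (hA : 0 < A.det) (hs : ¬ IsSquare A.det) {τ : ℂ} (hτ : τ ∈ HH)
    (hfix : mob A τ = τ) : jj τ ∈ R := by
  obtain ⟨M, hM⟩ : ∃ M : ℕ, (M : ℤ) = A.det := ⟨A.det.toNat, Int.toNat_of_nonneg hA.le⟩
  have : NeZero M := ⟨by rintro rfl; simp at hM; omega⟩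
  have f := fam_jj hA (M := M) (by rw [hM]) hs
  have hd : ∀ γ : SL, (A * (γ : M2)).det = A.det := fun γ => by
    rw [Matrix.det_mul, SL_det, mul_one]
  let H : ℂ → ℂ := ∏ q : SL ⧸ CongruenceSubgroup.Gamma M,
    (fun τ => jj τ - jj (mob (A * ((q.out : SL) : M2)) τ))
  obtain ⟨c, x, hl⟩ : ∃ c x, UnitLead c x H := UnitLead.prod _ fun q _ =>
    jj_sub_lead (by rw [hd]; exact hA) (by rwa [hd])
  refine jj_integral_of_zero (F := H) (HA.prod_mem fun q _ => f.mem _) ⟨fun σ h => ?_, fun σ h => ?_⟩ hl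
    hτ ?_
  · simpa [H, Finset.prod_apply] using f.prod_T id h
  · simpa [H, Finset.prod_apply] using f.prod_S id h
  · simp only [H, Finset.prod_apply]
    refine Finset.prod_eq_zero (Finset.mem_univ ((1 : SL) : SL ⧸ CongruenceSubgroup.Gamma M)) ?_
    have := f.out 1 hτ
    rw [this, Matrix.SpecialLinearGroup.coe_one, mul_one, hfix, sub_self]

/-! ### Translates of the discriminant -/

/-- The weight twelve translate `(cτ + d)⁻¹² Δ(Cτ)` of the discriminant. -/
noncomputable def EC (C : M2) (τ : ℂ) : ℂ := (den C τ ^ 12)⁻¹ * Del (mob C τ)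

lemma EC_ne_zero {C : M2} (hC : 0 < C.det) {τ : ℂ} (h : τ ∈ HH) : EC C τ ≠ 0 :=
  mul_ne_zero (inv_ne_zero (pow_ne_zero _ (den_ne_zero hC.ne' h))) (Del_ne_zero (mob_mem hC h))

lemma EC_diff {C : M2} (hC : 0 < C.det) : DifferentiableOn ℂ (EC C) HH := by
  have h1 : DifferentiableOn ℂ (fun τ => den C τ ^ 12) HH := by unfold den; fun_prop
  exact (h1.inv fun τ h => pow_ne_zero _ (den_ne_zero hC.ne' h)).mul
    (Del_diff.comp (mob_diff hC) fun _ h => mob_mem hC h)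

lemma EC_SL_mul (γ : SL) {C : M2} (hC : 0 < C.det) {τ : ℂ} (h : τ ∈ HH) :
    EC ((γ : M2) * C) τ = EC C τ := by
  have hd := den_ne_zero hC.ne' h
  have hd2 := SL_den γ (mob_mem hC h)
  unfold EC
  rw [SL_mul_mob γ hC h, den_mul _ _ hd, Del_mob γ (mob_mem hC h)]
  field_simp

lemma EC_mul_SL (C : M2) (γ : SL) {τ : ℂ} (h : τ ∈ HH) :
    EC C (mob γ τ) = den γ τ ^ 12 * EC (C * γ) τ := by
  have hd2 := SL_den γ h
  unfold EC
  rw [mob_mul_SL γ C h, den_mul _ _ hd2, mul_pow, mul_inv]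
  field_simp

lemma EC_upper {C : M2} (hC : 0 < C.det) : ∃ a b d : ℤ, 0 < a ∧ 0 < d ∧ a * d = C.det ∧
    a = Int.gcd (C 0 0) (C 1 0) ∧
    ∀ τ ∈ HH, EC C τ = ((d : ℂ) ^ 12)⁻¹ * Del (((a / d : ℚ) : ℂ) * τ + ((b / d : ℚ) : ℂ)) := by
  obtain ⟨γ, a, b, d, ha, hd, had, hg, hγ⟩ := exists_upper hC
  refine ⟨a, b, d, ha, hd, had, hg, fun τ h => ?_⟩
  rw [← EC_SL_mul γ hC h, hγ, EC, mob_upper]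
  simp [den]

/-- Up to `N`-th roots of unity, the Siegel functions depend only on `(r, s)` modulo `ℤ²`. -/
lemma G_shift {N : ℕ} {τ : ℂ} (h : τ ∈ HH) {r s : ℚ} (hr : ∃ k : ℤ, N * r = k) (hs : ∃ k : ℤ, N * s = k)
    (m n : ℤ) : G (r + m) (s + n) τ ^ N = G r s τ ^ N := by
  have key : ∀ c : ℤ, ∀ x : ℚ, (∃ k : ℤ, N * x = k) → ee (c * x) ^ N = 1 := by
    rintro c x ⟨k, hk⟩
    rw [← ee_nat_mul, ee_eq_one_iff]
    refine ⟨c * k, ?_⟩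
    have : ((N * x : ℚ) : ℂ) = k := by rw [hk]; simp
    push_cast at this ⊢
    rw [← this]; ring
  have hN : ∀ x : ℚ, (∃ k : ℤ, N * x = k) → ∀ c : ℤ, ∃ k : ℤ, N * (x + c) = k := by
    rintro x ⟨k, hk⟩ c
    exact ⟨k + N * c, by rw [mul_add, hk]; push_cast; ring⟩
  have h1 : ∀ r s : ℚ, (∃ k : ℤ, N * s = k) → G (r + 1) s τ ^ N = G r s τ ^ N := by
    intro r s hs
    have := key (-6) s hs
    push_cast at this
    rw [G_add_one_left h, mul_pow, this, one_mul]
  have h2 : ∀ r s : ℚ, (∃ k : ℤ, N * r = k) → G r (s + 1) τ ^ N = G r s τ ^ N := by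
    intro r s hr
    have := key 6 r hr
    push_cast at this
    rw [G_add_one_right, mul_pow, this, one_mul]
  have h3 : G (r + m) (s + n) τ ^ N = G r (s + n) τ ^ N := by
    have hs' := hN s hs n
    induction m using Int.induction_on with
    | zero => simp
    | succ i ih => rw [← ih, ← h1 (r + (i : ℤ)) _ hs']; push_cast; ring_nf
    | pred i ih => rw [← ih, ← h1 (r + (-(i : ℤ) - 1 : ℤ)) _ hs']; push_cast; ring_nf
  rw [h3]
  clear h3
  induction n using Int.induction_on with
  | zero => simp
  | succ i ih => rw [← ih, ← h2 _ (s + (i : ℤ)) hr]; push_cast; ring_nf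
  | pred i ih => rw [← ih, ← h2 _ (s + (-(i : ℤ) - 1 : ℤ)) hr]; push_cast; ring_nf

/-- The vector `(r, s)` is integral. -/
def Int2 (r s : ℚ) : Prop := ∃ m n : ℤ, r = m ∧ s = n

/-- If `ω = ζᵃ ≠ 1` is a `k`-th root of unity then `1 - ζ` divides `k`. -/
lemma root_dvd {ζ : ℂ} (hζ : ζ ∈ R) {a k : ℕ} (h1 : ζ ^ a ≠ 1) (hk : (ζ ^ a) ^ k = 1) :
    (k : ℂ) / (1 - ζ) ∈ R := by
  have hz : 1 - ζ ≠ 0 := fun h => h1 (by rw [← sub_eq_zero.1 h, one_pow])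
  have hs : ∑ i ∈ Finset.range k, (ζ ^ a) ^ i = 0 := by
    have := geom_sum_mul (ζ ^ a) k
    rw [hk, sub_self] at this
    exact (mul_eq_zero.1 this).resolve_right (sub_ne_zero.2 h1)
  have h2 : (k : ℂ) = (∑ i ∈ Finset.range k, ∑ j ∈ Finset.range (a * i), ζ ^ j) * (1 - ζ) := by
    rw [Finset.sum_mul]
    simp only [geom_sum_mul_neg, Finset.sum_sub_distrib, pow_mul, hs]
    simp
  rw [div_eq_iff hz |>.2 h2]
  exact R.sum_mem fun i _ => R.sum_mem fun j _ => R.pow_mem hζ j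

/-- The quotient of discriminants at two translates, normalized. -/
lemma EC_quot {B C : M2} (hB : 0 < B.det) (hC : 0 < C.det) : ∃ k : ℕ, ∃ c x, ∃ H : ℂ → ℂ,
    (Int.gcd ((B * C) 0 0) ((B * C) 1 0) : ℤ) = k * Int.gcd (C 0 0) (C 1 0) ∧
    UnitLead c x H ∧ ∀ τ ∈ HH,
      (B.det : ℂ) ^ 12 * (EC (B * C) τ / EC C τ) = (k : ℂ) ^ 12 * H τ := by
  have hBC : 0 < (B * C).det := by rw [Matrix.det_mul]; positivity
  obtain ⟨a, b, d, ha, hd, had, hg, h⟩ := EC_upper hC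
  obtain ⟨a', b', d', ha', hd', had', hg', h'⟩ := EC_upper hBC
  obtain ⟨p, hp⟩ : a ∣ C 0 0 := hg ▸ Int.gcd_dvd_left ..
  obtain ⟨q, hq⟩ : a ∣ C 1 0 := hg ▸ Int.gcd_dvd_right ..
  have hdvd : a ∣ a' := by
    rw [hg']
    refine Int.dvd_coe_gcd ?_ ?_ <;> simp only [Matrix.mul_apply, Fin.sum_univ_two, hp, hq]
    · exact ⟨B 0 0 * p + B 0 1 * q, by ring⟩
    · exact ⟨B 1 0 * p + B 1 1 * q, by ring⟩
  obtain ⟨k, hk⟩ := hdvd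
  have hk0 : 0 < k := by rw [hk] at ha'; exact pos_of_mul_pos_right ha' ha.le
  lift k to ℕ using hk0.le
  have l := Del_lead.comp (y := (a / d : ℚ)) (by positivity) (b / d)
  have l' := Del_lead.comp (y := (a' / d' : ℚ)) (by positivity) (b' / d')
  refine ⟨k, _, _, _, by rw [← hg, ← hg', hk, mul_comm], l'.mul l.inv, fun τ hτ => ?_⟩
  have hne : Del (((a / d : ℚ) : ℂ) * τ + ((b / d : ℚ) : ℂ)) ≠ 0 := fun e =>
    EC_ne_zero hC hτ (by rw [h τ hτ, e, mul_zero])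
  rw [h τ hτ, h' τ hτ]
  simp only [Pi.mul_apply, Pi.inv_apply]
  have hdc : (d : ℂ) ≠ 0 := by exact_mod_cast hd.ne'
  have hdc' : (d' : ℂ) ≠ 0 := by exact_mod_cast hd'.ne'
  have e : (B.det : ℂ) * d = k * d' := by
    have : a * (B.det * d) = a * (k * d') := by
      rw [Matrix.det_mul, ← had] at had'
      rw [hk] at had'
      linear_combination -had'
    exact_mod_cast mul_left_cancel₀ ha.ne' this
  have e12 : (B.det : ℂ) ^ 12 * d ^ 12 = k ^ 12 * d' ^ 12 := by rw [← mul_pow, e, mul_pow]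
  generalize Del (((a / d : ℚ) : ℂ) * τ + ((b / d : ℚ) : ℂ)) = X at hne ⊢
  generalize Del (((a' / d' : ℚ) : ℂ) * τ + ((b' / d' : ℚ) : ℂ)) = Y
  field_simp
  linear_combination Y * e12

/-! ### The quotients of discriminants by Siegel functions -/

/-- The vector `(r, s)` times the adjugate of `C` is integral. -/
def IntAdj (r s : ℚ) (C : M2) : Prop :=
  Int2 (r * C 1 1 - s * C 1 0) (-r * C 0 1 + s * C 0 0)

lemma IntAdj.shift {r s : ℚ} {C : M2} (h : IntAdj r s C) (m n : ℤ) : IntAdj (r + m) (s + n) C := by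
  obtain ⟨x, y, h1, h2⟩ := h
  refine ⟨x + m * C 1 1 - n * C 1 0, y - m * C 0 1 + n * C 0 0, ?_, ?_⟩ <;> push_cast <;>
    [rw [← h1]; rw [← h2]] <;> ring

lemma IntAdj.of_int {r s : ℚ} (h : Int2 r s) (C : M2) : IntAdj r s C := by
  obtain ⟨m, n, rfl, rfl⟩ := h
  exact ⟨m * C 1 1 - n * C 1 0, -m * C 0 1 + n * C 0 0, by push_cast; ring, by push_cast; ring⟩

lemma IntAdj.mul_SL (r s : ℚ) (C : M2) (γ : SL) :
    IntAdj (r * (γ 0 0 : ℤ) + s * (γ 1 0 : ℤ)) (r * (γ 0 1 : ℤ) + s * (γ 1 1 : ℤ)) (C * (γ : M2)) ↔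
      IntAdj r s C := by
  have hd : ((γ 0 0 : ℤ) : ℚ) * (γ 1 1 : ℤ) - (γ 0 1 : ℤ) * (γ 1 0 : ℤ) = 1 := by
    have := SL_det γ
    rw [det_eq] at this
    exact_mod_cast this
  unfold IntAdj
  simp only [Matrix.mul_apply, Fin.sum_univ_two]
  push_cast
  refine iff_of_eq (congrArg₂ _ ?_ ?_)
  · linear_combination (r * C 1 1 - s * C 1 0) * hd
  · linear_combination (-r * C 0 1 + s * C 0 0) * hd

/-- The quotient comparing `g` with the ratio of discriminants attached to `C` and `BC`. -/
noncomputable def W (N : ℕ) (B C : M2) (r s : ℚ) (τ : ℂ) : ℂ :=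
  ((B.det : ℂ) ^ 12 * (EC (B * C) τ / EC C τ) / G r s τ) ^ N

/-- For `0 < r < 1` the denominator of `W` has a unit as leading coefficient. -/
lemma W_intExp_pos (N : ℕ) {B C : M2} (hB : 0 < B.det) (hC : 0 < C.det) {r : ℚ} (h0 : 0 < r)
    (h1 : r < 1) (s : ℚ) : IntExp (W N B C r s) := by
  obtain ⟨k, c, x, H, _, hl, e⟩ := EC_quot hB hC
  have h2 := ((hl.mul (G_lead h0 h1 s).inv).pow N).intExp
  refine ((IntExp.of_PP (const_mem_PP (R.natCast_mem (k ^ (12 * N))))).mul h2).congr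
    (atI_HH fun τ hτ => ?_)
  rw [W, e τ hτ]
  simp only [Pi.mul_apply, Pi.pow_apply, Pi.inv_apply]
  push_cast
  rw [pow_mul, ← mul_pow, div_eq_mul_inv, mul_assoc]

lemma int_gcd {s : ℚ} {x y : ℤ} (h : Int2 (s * x) (s * y)) : ∃ m : ℤ, s * (Int.gcd x y : ℤ) = m := by
  obtain ⟨m, n, h1, h2⟩ := h
  refine ⟨m * Int.gcdA x y + n * Int.gcdB x y, ?_⟩
  rw [Int.gcd_eq_gcd_ab]
  push_cast
  rw [← h1, ← h2]; ring

/-- For `r = 0` the factor `(1 - e(s))^{12N}` of the denominator divides the factor `k^{12N}` of the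
quotient of discriminants. -/
lemma W_intExp_zero (N : ℕ) {B C : M2} (hB : 0 < B.det) (hC : 0 < C.det) {s : ℚ}
    (hn : ¬ IntAdj 0 s C) (hi : IntAdj 0 s (B * C)) : IntExp (W N B C 0 s) := by
  obtain ⟨k, c, x, H, hk, hl, e⟩ := EC_quot hB hC
  set a := Int.gcd (C 0 0) (C 1 0) with ha
  have h1 : ee s ^ a ≠ 1 := by
    rw [← ee_nat_mul, Ne, ee_eq_one_iff]
    rintro ⟨n, hn'⟩
    refine hn ?_
    have hn2 : (a : ℚ) * s = n := by exact_mod_cast hn'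
    obtain ⟨p, hp⟩ : (a : ℤ) ∣ C 0 0 := Int.gcd_dvd_left ..
    obtain ⟨q, hq⟩ : (a : ℤ) ∣ C 1 0 := Int.gcd_dvd_right ..
    refine ⟨-(n * q), n * p, ?_, ?_⟩
    · rw [hq]; push_cast; rw [← hn2]; ring
    · rw [hp]; push_cast; rw [← hn2]; ring
  have h2 : (ee s ^ a) ^ k = 1 := by
    rw [← pow_mul, ← ee_nat_mul, ee_eq_one_iff]
    obtain ⟨m, n, e1, e2⟩ := hi
    obtain ⟨l, hl⟩ := int_gcd (s := s) (x := (B * C) 0 0) (y := (B * C) 1 0)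
      ⟨n, -m, by rw [← e2]; ring, by push_cast; rw [← e1]; ring⟩
    refine ⟨l, ?_⟩
    rw [hk] at hl
    have : ((s * ((k * a : ℤ) : ℚ) : ℚ) : ℂ) = l := by rw [hl]; simp
    rw [← this]; push_cast; ring
  have h3 := root_dvd (ee_rat_mem s) h1 h2
  have hz : 1 - ee s ≠ 0 := fun h => h1 (by rw [← sub_eq_zero.1 h, one_pow])
  have h4 := ((hl.mul (PhiCore_lead s).inv).pow N).intExp
  refine ((IntExp.of_PP (const_mem_PP (R.pow_mem h3 (12 * N)))).mul h4).congr
    (atI_HH fun τ hτ => ?_)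
  rw [W, e τ hτ, G_zero hτ]
  simp only [Pi.mul_apply, Pi.pow_apply, Pi.inv_apply]
  rw [pow_mul, ← mul_pow, div_pow]
  congr 1
  rw [div_eq_mul_inv, div_eq_mul_inv, mul_inv]
  ring

lemma fract_data {N : ℕ} {r : ℚ} (hr : ∃ k : ℤ, N * r = k) : ∃ k : ℤ, N * Int.fract r = k := by
  obtain ⟨k, hk⟩ := hr
  exact ⟨k - N * ⌊r⌋, by rw [Int.fract, mul_sub, hk]; push_cast; ring⟩

lemma G_fract {N : ℕ} {τ : ℂ} (h : τ ∈ HH) {r s : ℚ} (hr : ∃ k : ℤ, N * r = k)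
    (hs : ∃ k : ℤ, N * s = k) : G (Int.fract r) s τ ^ N = G r s τ ^ N := by
  have := G_shift h (fract_data hr) hs ⌊r⌋ 0
  rw [Int.fract_add_floor] at this
  simpa using this.symm

lemma W_mem {N : ℕ} {B C : M2} (hB : 0 < B.det) (hC : 0 < C.det) {r s : ℚ} (hr : ∃ k : ℤ, N * r = k)
    (hs : ∃ k : ℤ, N * s = k) (hn : ¬ IntAdj r s C) (hi : IntAdj r s (B * C)) : W N B C r s ∈ HA := by
  have hBC : 0 < (B * C).det := by rw [Matrix.det_mul]; positivity
  refine ⟨?_, ?_⟩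
  · have e : ∀ τ ∈ HH, W N B C (Int.fract r) s τ = W N B C r s τ := fun τ h => by
      rw [W, W, div_pow, div_pow, G_fract h hr hs]
    refine IntExp.congr ?_ (atI_HH e)
    rcases (Int.fract_nonneg r).eq_or_lt with h0 | h0
    · obtain ⟨m, hr0⟩ : ∃ m : ℤ, r = 0 + m := ⟨⌊r⌋, by nth_rw 1 [← Int.fract_add_floor r, ← h0]⟩
      have key : ∀ D : M2, IntAdj r s D ↔ IntAdj 0 s D := fun D => by
        refine ⟨fun h => ?_, fun h => ?_⟩
        · have := h.shift (-m) 0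
          rw [hr0] at this
          simpa using this
        · have := h.shift m 0
          rw [← hr0] at this
          simpa using this
      rw [← h0]
      exact W_intExp_zero N hB hC (by rwa [← key]) (by rwa [← key])
    · exact W_intExp_pos N hB hC h0 (Int.fract_lt_one r) s
  · refine DifferentiableOn.pow (.div (.const_mul (.div (EC_diff hBC) (EC_diff hC) fun τ h =>
      EC_ne_zero hC h) _) (G_diff r s) fun τ h => G_ne_zero h fun h2 => hn (.of_int h2 C)) N

lemma G_mem {N : ℕ} {r s : ℚ} (hr : ∃ k : ℤ, N * r = k) (hs : ∃ k : ℤ, N * s = k) :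
    (G r s ^ N) ∈ HA := by
  refine ⟨?_, (G_diff r s).pow N⟩
  refine IntExp.congr (F := G (Int.fract r) s ^ N) ?_ (atI_HH fun τ h => G_fract h hr hs)
  refine IE.pow_mem ?_ N
  rcases (Int.fract_nonneg r).eq_or_lt with h0 | h0
  · rw [← h0]; exact G_intExp_zero s
  · exact (G_lead h0 (Int.fract_lt_one r) s).intExp

/-! ### Integrality of the values -/

/-- First coordinate of the row vector `(r, s) γ`. -/
def v0 (r s : ℚ) (γ : SL) : ℚ := r * (γ 0 0 : ℤ) + s * (γ 1 0 : ℤ)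

/-- Second coordinate of the row vector `(r, s) γ`. -/
def v1 (r s : ℚ) (γ : SL) : ℚ := r * (γ 0 1 : ℤ) + s * (γ 1 1 : ℤ)

lemma v0_mul (r s : ℚ) (γ δ : SL) : v0 r s (γ * δ) = v0 (v0 r s γ) (v1 r s γ) δ := by
  simp only [v0, v1, Matrix.SpecialLinearGroup.coe_mul, Matrix.mul_apply, Fin.sum_univ_two]
  push_cast
  ring

lemma v1_mul (r s : ℚ) (γ δ : SL) : v1 r s (γ * δ) = v1 (v0 r s γ) (v1 r s γ) δ := by
  simp only [v0, v1, Matrix.SpecialLinearGroup.coe_mul, Matrix.mul_apply, Fin.sum_univ_two]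
  push_cast
  ring

lemma v0_T (r s : ℚ) (γ : SL) : v0 r s (γ * ModularGroup.T) = v0 r s γ := by
  rw [v0_mul]; simp [v0, ModularGroup.T]

lemma v1_T (r s : ℚ) (γ : SL) : v1 r s (γ * ModularGroup.T) = v0 r s γ + v1 r s γ := by
  rw [v1_mul, v1]; simp [ModularGroup.T]

lemma v0_S (r s : ℚ) (γ : SL) : v0 r s (γ * ModularGroup.S) = v1 r s γ := by
  rw [v0_mul, v0]; simp [ModularGroup.S]

lemma v1_S (r s : ℚ) (γ : SL) : v1 r s (γ * ModularGroup.S) = -v0 r s γ := by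
  rw [v1_mul, v1]; simp [ModularGroup.S]

lemma v_one (r s : ℚ) : v0 r s 1 = r ∧ v1 r s 1 = s := by simp [v0, v1]

lemma v_den {N : ℕ} {r s : ℚ} (hr : ∃ k : ℤ, N * r = k) (hs : ∃ k : ℤ, N * s = k) (γ : SL) :
    (∃ k : ℤ, N * v0 r s γ = k) ∧ (∃ k : ℤ, N * v1 r s γ = k) := by
  obtain ⟨k, hk⟩ := hr
  obtain ⟨l, hl⟩ := hs
  refine ⟨⟨k * γ 0 0 + l * γ 1 0, ?_⟩, ⟨k * γ 0 1 + l * γ 1 1, ?_⟩⟩ <;> push_cast <;>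
    rw [← hk, ← hl] <;> simp only [v0, v1] <;> ring

lemma v_int (r s : ℚ) (γ : SL) (h : Int2 (v0 r s γ) (v1 r s γ)) : Int2 r s := by
  obtain ⟨m, n, h1, h2⟩ := h
  have hd : ((γ 0 0 : ℤ) : ℚ) * (γ 1 1 : ℤ) - (γ 0 1 : ℤ) * (γ 1 0 : ℤ) = 1 := by
    have := SL_det γ
    rw [det_eq] at this
    exact_mod_cast this
  refine ⟨m * γ 1 1 - n * γ 1 0, -m * γ 0 1 + n * γ 0 0, ?_, ?_⟩ <;> push_cast <;>
    rw [← h1, ← h2] <;> simp only [v0, v1]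
  · linear_combination -r * hd
  · linear_combination -s * hd

lemma v_Gamma {M N : ℕ} (hM : N ∣ M) {r s : ℚ} (hr : ∃ k : ℤ, N * r = k) (hs : ∃ k : ℤ, N * s = k)
    {δ : SL} (hδ : δ ∈ CongruenceSubgroup.Gamma M) (γ : SL) : ∃ m n : ℤ,
    v0 r s (δ * γ) = v0 r s γ + m ∧ v1 r s (δ * γ) = v1 r s γ + n := by
  obtain ⟨h1, h2, h3, h4⟩ := CongruenceSubgroup.Gamma_mem.1 hδ
  obtain ⟨k, hk⟩ := hr
  obtain ⟨l, hl⟩ := hs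
  have key : ∀ x y : ℤ, (x : ZMod M) = (y : ZMod M) → (N : ℤ) ∣ x - y := fun x y h =>
    (Int.natCast_dvd_natCast.2 hM).trans ((ZMod.intCast_eq_intCast_iff_dvd_sub y x M).1 h.symm)
  obtain ⟨e1, k1⟩ := key (δ 0 0) 1 (by simpa using h1)
  obtain ⟨e2, k2⟩ := key (δ 0 1) 0 (by simpa using h2)
  obtain ⟨e3, k3⟩ := key (δ 1 0) 0 (by simpa using h3)
  obtain ⟨e4, k4⟩ := key (δ 1 1) 1 (by simpa using h4)
  have f1 : ((δ 0 0 : ℤ) : ℚ) = 1 + N * e1 := by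
    have : δ 0 0 = 1 + N * e1 := by linarith
    rw [this]; push_cast; rfl
  have f2 : ((δ 0 1 : ℤ) : ℚ) = N * e2 := by
    have : δ 0 1 = N * e2 := by linarith
    rw [this]; push_cast; rfl
  have f3 : ((δ 1 0 : ℤ) : ℚ) = N * e3 := by
    have : δ 1 0 = N * e3 := by linarith
    rw [this]; push_cast; rfl
  have f4 : ((δ 1 1 : ℤ) : ℚ) = 1 + N * e4 := by
    have : δ 1 1 = 1 + N * e4 := by linarith
    rw [this]; push_cast; rfl
  refine ⟨(k * e1 + l * e3) * γ 0 0 + (k * e2 + l * e4) * γ 1 0,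
    (k * e1 + l * e3) * γ 0 1 + (k * e2 + l * e4) * γ 1 1, ?_, ?_⟩ <;>
  simp only [v0, v1, Matrix.SpecialLinearGroup.coe_mul, Matrix.mul_apply, Fin.sum_univ_two] <;>
  push_cast <;> rw [f1, f2, f3, f4, ← hk, ← hl] <;> ring

lemma fam_G {N : ℕ} {r s : ℚ} (hr : ∃ k : ℤ, N * r = k) (hs : ∃ k : ℤ, N * s = k) (h : ¬ Int2 r s) :
    Fam N (fun γ => G (v0 r s γ) (v1 r s γ) ^ N) := by
  refine ⟨fun γ => G_mem (v_den hr hs γ).1 (v_den hr hs γ).2, fun γ τ hτ => ?_, fun γ τ hτ => ?_,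
    fun δ hδ γ τ hτ => ?_⟩ <;> simp only [Pi.pow_apply]
  · rw [G_T, v0_T, v1_T]
  · rw [G_S hτ fun h2 => h (v_int r s γ h2), v0_S, v1_S]
  · obtain ⟨m, n, h1, h2⟩ := v_Gamma (dvd_refl N) hr hs hδ γ
    rw [h1, h2, G_shift hτ (v_den hr hs γ).1 (v_den hr hs γ).2]

lemma EC_ratio_mul_SL {B C : M2} (γ : SL) {τ : ℂ} (h : τ ∈ HH) :
    EC (B * C) (mob γ τ) / EC C (mob γ τ) = EC (B * (C * (γ : M2))) τ / EC (C * (γ : M2)) τ := by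
  rw [EC_mul_SL _ γ h, EC_mul_SL _ γ h, mul_assoc B,
    mul_div_mul_left _ _ (pow_ne_zero _ (SL_den γ h))]

lemma fam_W {M N : ℕ} {B C : M2} (hB : 0 < B.det) (hC : 0 < C.det) {r s : ℚ} (hNM : N ∣ M)
    (hM : (B * C).det ∣ M) (hr : ∃ k : ℤ, N * r = k)
    (hs : ∃ k : ℤ, N * s = k) (hn : ¬ IntAdj r s C) (hi : IntAdj r s (B * C)) :
    Fam M (fun γ => W N B (C * (γ : M2)) (v0 r s γ) (v1 r s γ)) := by
  have hBC : 0 < (B * C).det := by rw [Matrix.det_mul]; positivity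
  have hM' : C.det ∣ M := (Dvd.intro_left _ (Matrix.det_mul B C).symm).trans hM
  have hCp : ∀ γ : SL, 0 < (C * (γ : M2)).det := fun γ => by rwa [Matrix.det_mul, SL_det, mul_one]
  have hBCp : ∀ γ : SL, 0 < (B * C * (γ : M2)).det := fun γ => by
    rwa [Matrix.det_mul, SL_det, mul_one]
  refine ⟨fun γ => ?_, fun γ τ hτ => ?_, fun γ τ hτ => ?_, fun δ hδ γ τ hτ => ?_⟩
  · refine W_mem hB (hCp γ) (v_den hr hs γ).1 (v_den hr hs γ).2 ?_ ?_
    · rwa [v0, v1, IntAdj.mul_SL]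
    · rwa [v0, v1, ← mul_assoc, IntAdj.mul_SL]
  · have := EC_ratio_mul_SL (B := B) (C := C * (γ : M2)) ModularGroup.T hτ
    rw [mob_T] at this
    rw [W, W, this, G_T, v0_T, v1_T, Matrix.SpecialLinearGroup.coe_mul, mul_assoc C]
  · have := EC_ratio_mul_SL (B := B) (C := C * (γ : M2)) ModularGroup.S hτ
    rw [mob_S] at this
    have hni : ¬ Int2 (v0 r s γ) (v1 r s γ) := fun h2 => hn (.of_int (v_int r s γ h2) C)
    rw [W, W, this, G_S hτ hni, v0_S, v1_S, Matrix.SpecialLinearGroup.coe_mul, mul_assoc C]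
  · obtain ⟨m, n, h1, h2⟩ := v_Gamma hNM hr hs hδ γ
    obtain ⟨δ1, e1⟩ := conj_SL hC hM' hδ
    obtain ⟨δ2, e2⟩ := conj_SL hBC hM hδ
    have E1 : EC (C * ((δ * γ : SL) : M2)) τ = EC (C * (γ : M2)) τ := by
      rw [Matrix.SpecialLinearGroup.coe_mul, ← mul_assoc, e1, mul_assoc, EC_SL_mul δ1 (hCp γ) hτ]
    have E2 : EC (B * (C * ((δ * γ : SL) : M2))) τ = EC (B * (C * (γ : M2))) τ := by
      rw [Matrix.SpecialLinearGroup.coe_mul, ← mul_assoc, ← mul_assoc, e2, mul_assoc,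
        EC_SL_mul δ2 (hBCp γ) hτ, mul_assoc]
    rw [W, W, E1, E2, div_pow, div_pow, h1, h2, G_shift hτ (v_den hr hs γ).1 (v_den hr hs γ).2]

lemma G_integral {N : ℕ} (hN : 0 < N) {r s : ℚ} (hr : ∃ k : ℤ, N * r = k) (hs : ∃ k : ℤ, N * s = k)
    (h : ¬ Int2 r s) {τ : ℂ} (hτ : τ ∈ HH) (hj : jj τ ∈ R) : G r s τ ^ N ∈ R := by
  have : NeZero N := ⟨hN.ne'⟩
  have := (fam_G hr hs h).integral hτ hj 1
  rwa [(v_one r s).1, (v_one r s).2] at this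

lemma W_integral {N : ℕ} (hN : 0 < N) {B C : M2} (hB : 0 < B.det) (hC : 0 < C.det) {r s : ℚ}
    (hr : ∃ k : ℤ, N * r = k) (hs : ∃ k : ℤ, N * s = k) (hn : ¬ IntAdj r s C)
    (hi : IntAdj r s (B * C)) {τ : ℂ} (hτ : τ ∈ HH) (hj : jj τ ∈ R) : W N B C r s τ ∈ R := by
  have hBC : 0 < (B * C).det := by rw [Matrix.det_mul]; positivity
  obtain ⟨D, hD⟩ : ∃ D : ℕ, (D : ℤ) = (B * C).det := ⟨_, Int.toNat_of_nonneg hBC.le⟩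
  have : NeZero (N * D) := ⟨mul_ne_zero hN.ne' (by rintro rfl; simp at hD; omega)⟩
  have := (fam_W (M := N * D) hB hC (Dvd.intro _ rfl)
    (by rw [← hD]; exact Int.natCast_dvd_natCast.2 (Dvd.intro_left _ rfl)) hr hs hn hi).integral hτ hj 1
  rwa [(v_one r s).1, (v_one r s).2, Matrix.SpecialLinearGroup.coe_one, mul_one] at this

/-! ### Complex multiplication -/

/-- The matrix by which the conjugate of `x + yθ` acts on `(θ, 1)`, where `θ² = tθ - m`. -/
def cm (t m x y : ℤ) : M2 := !![x, y * m; -y, x + y * t]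

lemma cm_det (t m x y : ℤ) : (cm t m x y).det = x ^ 2 + t * x * y + m * y ^ 2 := by
  rw [det_eq]; simp [cm]; ring

lemma cm_mul (t m x y z w : ℤ) :
    cm t m z w * cm t m x y = cm t m (x * z - m * y * w) (x * w + y * z + t * y * w) := by
  ext i j
  fin_cases i <;> fin_cases j <;> simp [cm, Matrix.mul_apply, Fin.sum_univ_two] <;> ring

/-- The norm form of `θ` is positive definite. -/
lemma quad_pos {θ : ℂ} (h : θ ∈ HH) {t m : ℤ} (hθ : θ ^ 2 = t * θ - m) {x y : ℤ}
    (hxy : ¬ (x = 0 ∧ y = 0)) : 0 < x ^ 2 + t * x * y + m * y ^ 2 := by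
  have hi : 0 < θ.im := h
  have h1 := congrArg Complex.im hθ
  have h2 := congrArg Complex.re hθ
  simp [pow_two] at h1 h2
  have ht : (t : ℝ) = 2 * θ.re := mul_right_cancel₀ hi.ne' (by linarith)
  have hm : (m : ℝ) = θ.re ^ 2 + θ.im ^ 2 := by rw [ht] at h2; linarith
  have key : ((x ^ 2 + t * x * y + m * y ^ 2 : ℤ) : ℝ) = (x + θ.re * y) ^ 2 + (θ.im * y) ^ 2 := by
    push_cast; rw [ht, hm]; ring
  have h0 : (0 : ℝ) < ((x ^ 2 + t * x * y + m * y ^ 2 : ℤ) : ℝ) := by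
    rw [key]
    by_cases hy : y = 0
    · have hx : x ≠ 0 := fun hx => hxy ⟨hx, hy⟩
      have : (x : ℝ) ≠ 0 := by exact_mod_cast hx
      rw [hy]; simp; positivity
    · have : (y : ℝ) ≠ 0 := by exact_mod_cast hy
      positivity
  exact_mod_cast h0

lemma cm_den (t m x y : ℤ) (θ : ℂ) : den (cm t m x y) θ = x + y * (t - θ) := by
  simp [den, cm]; ring

/-- `θ` is a fixed point of the matrices attached to the elements of `ℤ[θ]`. -/
lemma cm_mob {θ : ℂ} {t m : ℤ} (hθ : θ ^ 2 = t * θ - m) {x y : ℤ}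
    (hd : den (cm t m x y) θ ≠ 0) : mob (cm t m x y) θ = θ := by
  rw [mob, div_eq_iff hd, cm_den]
  simp [cm]
  linear_combination y * hθ

/-- The singular modulus of an imaginary quadratic integer is integral, since some translate of `θ`
by an integer has a norm that is not a square. -/
lemma jj_cm {θ : ℂ} (h : θ ∈ HH) {t m : ℤ} (hθ : θ ^ 2 = t * θ - m) : jj θ ∈ R := by
  have hD : 0 < 4 * m - t ^ 2 := by
    have := quad_pos h hθ (x := -t) (y := 2) (by simp)
    nlinarith
  obtain ⟨k, hk⟩ : ∃ k : ℤ, 4 * m - t ^ 2 < 2 * k + t :=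
    ⟨4 * m - t ^ 2 + |t| + 1, by have := neg_abs_le t; have := abs_nonneg t; linarith⟩
  have hdet := cm_det t m k 1
  have hpos := quad_pos h hθ (x := k) (y := 1) (by simp)
  have hp : 0 < (cm t m k 1).det := by rwa [hdet]
  refine jj_integral hp ?_ h (cm_mob hθ (den_ne_zero hp.ne' h))
  rintro ⟨l, hl⟩
  rw [hdet] at hl
  have e : (2 * |l|) ^ 2 = (2 * k + t) ^ 2 + (4 * m - t ^ 2) := by
    rw [mul_pow, sq_abs]; linear_combination -4 * hl
  have h1 : 2 * k + t < 2 * |l| := by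
    refine lt_of_pow_lt_pow_left₀ 2 (by positivity) ?_
    rw [e]; linarith
  nlinarith

/-- Let `α = x + yθ` and `β = z + wθ`. If `sα` is not in `ℤ[θ]` but `sαβ` is, then `β^{12N}` is divisible
by the value at `θ` of the `12N`-th power of `g_{[0,s]}`. -/
lemma unit_div {θ : ℂ} (h : θ ∈ HH) {t m : ℤ} (hθ : θ ^ 2 = t * θ - m) {N : ℕ} (hN : 0 < N) {s : ℚ}
    (hs : ∃ k : ℤ, N * s = k) {x y z w : ℤ} (hxy : ¬ (x = 0 ∧ y = 0)) (hzw : ¬ (z = 0 ∧ w = 0))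
    (hn : ¬ Int2 (s * x) (s * y))
    (hi : Int2 (s * (x * z - m * y * w : ℤ)) (s * (x * w + y * z + t * y * w : ℤ))) :
    ((z : ℂ) + w * θ) ^ (12 * N) / G 0 s θ ^ N ∈ R := by
  have hj := jj_cm h hθ
  have hC : 0 < (cm t m x y).det := by rw [cm_det]; exact quad_pos h hθ hxy
  have hB : 0 < (cm t m z w).det := by rw [cm_det]; exact quad_pos h hθ hzw
  have key := W_integral hN hB hC (r := 0) (s := s) ⟨0, by simp⟩ hs (by
      rintro ⟨p, q, e1, e2⟩
      refine hn ⟨q, p, ?_, ?_⟩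
      · rw [← e2]; simp [cm]
      · rw [← e1]; simp [cm]) (by
      obtain ⟨p, q, e1, e2⟩ := hi
      rw [cm_mul]
      refine ⟨q, p, ?_, ?_⟩
      · rw [← e2]; simp [cm]; ring
      · rw [← e1]; simp [cm]) h hj
  have hBC : 0 < (cm t m z w * cm t m x y).det := by rw [Matrix.det_mul]; positivity
  have hdC := den_ne_zero hC.ne' h
  have hdB := den_ne_zero hB.ne' h
  have hfC := cm_mob hθ hdC
  have hfB := cm_mob hθ hdB
  have hD := Del_ne_zero h
  have e : ((cm t m z w).det : ℂ) = (z + w * θ) * den (cm t m z w) θ := by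
    rw [cm_det, cm_den]; push_cast; linear_combination w ^ 2 * hθ
  convert key using 1
  rw [W, EC, EC, den_mul _ _ hdC, mob_mul _ _ hdC, hfC, hfB, e, div_pow, pow_mul]
  congr 2
  field_simp

/-! ### Siegel functions as products -/

lemma qpow_eq (τ : ℂ) (x : ℝ) : qpow τ x = ee (x * τ) := by rw [qpow, ee]; ring_nf

/-- The twelfth power of the Siegel function in terms of `Φ`; the quadratic exponents of `q` and the
root of unity are cleared by the power. -/
lemma siegel_pow {τ : ℂ} (h : τ ∈ HH) (s : ℚ) : siegel 0 s τ ^ 12 = G 0 s τ := by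
  have hq := ee_norm_lt h
  have e1 : ∀ n : ℕ, qpow τ ((n + 1 : ℝ)) = ee τ ^ n * ee τ := by
    intro n
    rw [qpow_eq, ← ee_nat_mul, ← ee_add]; congr 1; push_cast; ring
  have e2 : Complex.exp (2 * (π : ℂ) * Complex.I * (s : ℂ)) = ee s := rfl
  have e3 : Complex.exp (-(2 * (π : ℂ) * Complex.I * (s : ℂ))) = ee (-s) := by
    rw [ee]; ring_nf
  have e4 : (∏' n : ℕ, ((1 - ee τ ^ n * ee τ * ee s) * (1 - ee τ ^ n * ee τ * ee (-s)))) =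
      poch (ee τ) (ee τ * ee s) * poch (ee τ) (ee τ * ee (-s)) := by
    rw [poch, poch, ← (poch_multipliable hq _).tprod_mul (poch_multipliable hq _)]
    simp only [mul_assoc]
  have e5 : qpow τ (1 / 2 * (1 / 6)) ^ 12 = ee τ := by
    rw [qpow_eq, ← ee_nat_mul]; congr 1; push_cast; ring
  have e6 : Complex.exp ((π : ℂ) * Complex.I * (s : ℂ) * (0 - 1)) ^ 12 = ee (-6 * s) := by
    rw [← Complex.exp_nat_mul, ee]; congr 1; push_cast; ring
  rw [G_zero h, siegel]
  have e0 : qpow τ 0 = 1 := by simp [qpow]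
  simp only [Rat.cast_zero, add_zero, sub_zero, e1, e2, e3, e4, e0, one_mul, zero_pow two_ne_zero,
    zero_add]
  rw [mul_pow, mul_pow, mul_pow, neg_pow, e5, e6, PhiCore]
  ring_nf

/-! ### Arithmetic of the quadratic field -/

open NumberField

/-- In a Dedekind domain with finite class group, a non-unit `n` whose ideal is not a prime power
divides a product of two coprime elements, neither of which it divides. They generate powers of
the two factors of a splitting of `(n)` into coprime proper ideals. -/
lemma exists_coprime_split {A : Type*} [CommRing A] [IsDedekindDomain A] [Finite (ClassGroup A)]
    {n : A} (h0 : n ≠ 0)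
    (hn : ¬ ∃ (P : Ideal A) (k : ℕ), P.IsPrime ∧ Ideal.span {n} = P ^ k) :
    ∃ α β : A, IsCoprime α β ∧ n ∣ α * β ∧ ¬ n ∣ α ∧ ¬ n ∣ β := by
  have hI0 : Ideal.span {n} ≠ 0 := by simpa using h0
  have hpow : ∀ I : Ideal A, I ≠ 0 → ∃ α : A, Ideal.span {α} = I ^ Nat.card (ClassGroup A) := by
    intro I hI
    have h1 : ClassGroup.mk0 (⟨I, mem_nonZeroDivisors_of_ne_zero hI⟩ : nonZeroDivisors (Ideal A)) ^
        Nat.card (ClassGroup A) = 1 := pow_card_eq_one'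
    rw [← map_pow, ClassGroup.mk0_eq_one_iff] at h1
    obtain ⟨α, hα⟩ := h1.principal
    exact ⟨α, hα.symm⟩
  have hT : Ideal.span {n} ≠ ⊤ := by
    intro h
    exact hn ⟨⊥, 0, Ideal.isPrime_bot, by rw [h, pow_zero, Ideal.one_eq_top]⟩
  obtain ⟨P, hP, hPI⟩ := Ideal.exists_le_maximal _ hT
  have hfin : FiniteMultiplicity P (Ideal.span {n}) := by
    refine FiniteMultiplicity.of_not_isUnit ?_ hI0
    rw [Ideal.isUnit_iff]; exact hP.ne_top
  obtain ⟨B, hB, hPB⟩ := hfin.exists_eq_pow_mul_and_not_dvd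
  set k := multiplicity P (Ideal.span {n}) with hk
  have hk0 : k ≠ 0 := by
    intro h
    rw [h, pow_zero, one_mul] at hB
    exact hPB (hB ▸ Ideal.dvd_iff_le.mpr hPI)
  have hBT : ¬ IsUnit B := by
    intro h
    rw [Ideal.isUnit_iff] at h
    exact hn ⟨P, k, hP.isPrime, by rw [hB, h, ← Ideal.one_eq_top, mul_one]⟩
  have hAT : ¬ IsUnit (P ^ k) := by
    rw [isUnit_pow_iff hk0, Ideal.isUnit_iff]; exact hP.ne_top
  have hcop : IsCoprime (P ^ k) B := by
    refine IsCoprime.pow_left ?_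
    rw [Ideal.isCoprime_iff_sup_eq]
    refine hP.1.2 _ (lt_of_le_of_ne le_sup_left fun h => hPB ?_)
    rw [Ideal.dvd_iff_le, h]; exact le_sup_right
  have hA0 : P ^ k ≠ 0 := fun h => hI0 (by rw [hB, h, zero_mul])
  have hB0 : B ≠ 0 := fun h => hI0 (by rw [hB, h, mul_zero])
  obtain ⟨α, hα⟩ := hpow _ hA0
  obtain ⟨β, hβ⟩ := hpow _ hB0
  have hh : Nat.card (ClassGroup A) ≠ 0 := Nat.card_pos.ne'
  have key : ∀ {x : A}, n ∣ x ↔ Ideal.span {n} ∣ Ideal.span {x} := by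
    intro x; rw [Ideal.dvd_iff_le, Ideal.span_singleton_le_span_singleton]
  refine ⟨α, β, ?_, ?_, ?_, ?_⟩
  · rw [← Ideal.isCoprime_span_singleton_iff, hα, hβ]; exact hcop.pow
  · rw [key, ← Ideal.span_singleton_mul_span_singleton, hα, hβ, ← mul_pow, ← hB]
    exact dvd_pow_self _ hh
  · rw [key, hα]
    intro h
    have h2 : B ∣ (P ^ k) ^ Nat.card (ClassGroup A) := (Dvd.intro_left _ hB.symm).trans h
    exact hBT (hcop.symm.pow_right.isUnit_of_dvd' dvd_rfl h2)
  · rw [key, hβ]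
    intro h
    have h2 : P ^ k ∣ B ^ Nat.card (ClassGroup A) := (Dvd.intro _ hB.symm).trans h
    exact hAT (hcop.pow_right.isUnit_of_dvd' dvd_rfl h2)

/-- The ring of integers of a quadratic field has a `ℤ`-basis `1, ω`. -/
lemma exists_basis_one (K : Type*) [Field K] [NumberField K] (hdeg : Module.finrank ℚ K = 2) :
    ∃ B : Module.Basis (Fin 2) ℤ (𝓞 K), B 0 = 1 := by
  have hcard : Module.finrank ℤ (𝓞 K) = 2 := by rw [RingOfIntegers.rank, hdeg]
  let b : Module.Basis (Fin 2) ℤ (𝓞 K) := Module.finBasisOfFinrankEq ℤ (𝓞 K) hcard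
  have hone : b.repr 1 0 • b 0 + b.repr 1 1 • b 1 = 1 := by
    rw [← Fin.sum_univ_two (fun i => b.repr 1 i • b i)]; exact b.sum_repr 1
  set p := b.repr 1 0
  set q := b.repr 1 1
  have hg : IsCoprime p q := by
    rw [Int.isCoprime_iff_gcd_eq_one]
    obtain ⟨p', hp'⟩ := Int.gcd_dvd_left p q
    obtain ⟨q', hq'⟩ := Int.gcd_dvd_right p q
    set g := Int.gcd p q
    have h1 : algebraMap ℤ (𝓞 K) g * (p' • b 0 + q' • b 1) = 1 := by
      rw [← Algebra.smul_def, smul_add, smul_smul, smul_smul, ← hp', ← hq', hone]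
    have h2 := congrArg (Algebra.norm ℤ) h1
    rw [map_mul, Algebra.norm_algebraMap, hcard, (Algebra.norm ℤ).map_one] at h2
    have h3 : IsUnit (g : ℤ) := by
      refine isUnit_of_dvd_one ?_
      rw [← h2, pow_two, mul_assoc]; exact dvd_mul_right _ _
    simpa [Int.isUnit_iff_natAbs_eq] using h3
  obtain ⟨r, s, hrs⟩ := hg
  have hli : LinearIndependent ℤ ![(1 : 𝓞 K), -s • b 0 + r • b 1] := by
    rw [LinearIndependent.pair_iff]
    intro x y hxy
    rw [← hone] at hxy
    have e : (x * p - y * s) • b 0 + (x * q + y * r) • b 1 = 0 := by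
      rw [← hxy]; module
    have hb := Fintype.linearIndependent_iff.mp b.linearIndependent
      ![x * p - y * s, x * q + y * r] (by rw [Fin.sum_univ_two]; exact e)
    have e1 : x * p - y * s = 0 := hb 0
    have e2 : x * q + y * r = 0 := hb 1
    constructor
    · linear_combination r * e1 + s * e2 - x * hrs
    · linear_combination p * e2 - q * e1 - y * hrs
  have hsp : ⊤ ≤ Submodule.span ℤ (Set.range ![(1 : 𝓞 K), -s • b 0 + r • b 1]) := by
    have m0 : (1 : 𝓞 K) ∈ Submodule.span ℤ (Set.range ![(1 : 𝓞 K), -s • b 0 + r • b 1]) :=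
      Submodule.subset_span ⟨0, rfl⟩
    have m1 : -s • b 0 + r • b 1 ∈
      Submodule.span ℤ (Set.range ![(1 : 𝓞 K), -s • b 0 + r • b 1]) :=
      Submodule.subset_span ⟨1, rfl⟩
    rw [← b.span_eq, Submodule.span_le]
    rintro _ ⟨i, rfl⟩
    fin_cases i
    · have : b 0 = r • (1 : 𝓞 K) - q • (-s • b 0 + r • b 1) := by
        rw [← hone]
        calc b 0 = (r * p + s * q) • b 0 := by rw [hrs, one_smul]
          _ = _ := by module
      exact (congrArg (· ∈ Submodule.span ℤ _) this).mpr
        (sub_mem (Submodule.smul_mem _ _ m0) (Submodule.smul_mem _ _ m1))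
    · have : b 1 = s • (1 : 𝓞 K) + p • (-s • b 0 + r • b 1) := by
        rw [← hone]
        calc b 1 = (r * p + s * q) • b 1 := by rw [hrs, one_smul]
          _ = _ := by module
      exact (congrArg (· ∈ Submodule.span ℤ _) this).mpr
        (add_mem (Submodule.smul_mem _ _ m0) (Submodule.smul_mem _ _ m1))
  exact ⟨Module.Basis.mk hli hsp, by simp⟩

lemma discr_neg (K : Type*) [Field K] [NumberField K] (hdeg : Module.finrank ℚ K = 2)
    (hreal : IsEmpty (K →+* ℝ)) : discr K < 0 := by
  have h1 : InfinitePlace.nrRealPlaces K = 0 := by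
    classical
    rw [InfinitePlace.nrRealPlaces, Fintype.card_eq_zero_iff]
    exact ⟨fun w => hreal.false (InfinitePlace.embedding_of_isReal w.2)⟩
  have h2 := InfinitePlace.card_add_two_mul_card_eq_rank K
  rw [h1, hdeg] at h2
  have h3 : InfinitePlace.nrComplexPlaces K = 1 := by omega
  have h4 := sign_discr K
  rw [h3, pow_one] at h4
  exact Int.sign_eq_neg_one_iff_neg.mp h4

/-- `O_K = ℤ + ℤϑ` for an element `ϑ` which a suitable complex embedding sends to `θ_K`. -/
lemma exists_theta (K : Type*) [Field K] [NumberField K] (hdeg : Module.finrank ℚ K = 2)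
    (hreal : IsEmpty (K →+* ℝ)) {θ : ℂ}
    (hθ : θ = ((discr K : ℂ) + Complex.I * (Real.sqrt (-(discr K : ℝ)) : ℂ)) / 2) :
    θ ∈ HH ∧ ∃ (ϑ : 𝓞 K) (t m : ℤ) (σ : 𝓞 K →+* ℂ), ϑ ^ 2 = t * ϑ - m ∧ σ ϑ = θ ∧
      ∀ α : 𝓞 K, ∃ x y : ℤ, α = x + y * ϑ := by
  have hd := discr_neg K hdeg hreal
  have hdR : (0 : ℝ) < -(discr K : ℝ) := by have : (discr K : ℝ) < 0 := by exact_mod_cast hd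
                                            linarith
  constructor
  · have : θ.im = Real.sqrt (-(discr K : ℝ)) / 2 := by
      rw [hθ]; simp [Complex.div_ofNat_im]
    change 0 < θ.im
    rw [this]; have := Real.sqrt_pos.mpr hdR; positivity
  obtain ⟨B, hB⟩ := exists_basis_one K hdeg
  have hspan : ∀ α : 𝓞 K, α = (B.repr α 0 : 𝓞 K) + (B.repr α 1 : 𝓞 K) * B 1 := by
    intro α
    have := B.sum_repr α
    rw [Fin.sum_univ_two, hB] at this
    simpa [zsmul_eq_mul] using this.symm
  set ω := B 1 with hω
  obtain ⟨b, hb⟩ : ∃ b : ℤ, b = - B.repr (ω * ω) 0 := ⟨_, rfl⟩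
  obtain ⟨a, ha⟩ : ∃ a : ℤ, a = B.repr (ω * ω) 1 := ⟨_, rfl⟩
  have hsq : ω * ω = a * ω - b := by
    rw [hb, ha]; push_cast; linear_combination hspan (ω * ω)
  have r00 : B.repr 1 0 = 1 := by rw [← hB, B.repr_self]; simp
  have r01 : B.repr ω 0 = 0 := by rw [hω, B.repr_self]; simp
  have r11 : B.repr ω 1 = 1 := by rw [hω, B.repr_self]; simp
  have r10 : B.repr 1 1 = 0 := by rw [← hB, B.repr_self]; simp
  have htr : Algebra.trace ℤ (𝓞 K) ω = a := by
    rw [Algebra.trace_eq_matrix_trace B, Matrix.trace_fin_two, Algebra.leftMulMatrix_eq_repr_mul,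
      Algebra.leftMulMatrix_eq_repr_mul, hB, mul_one, ← hω, ← ha, r01, zero_add]
  have htr1 : Algebra.trace ℤ (𝓞 K) 1 = 2 := by
    rw [Algebra.trace_eq_matrix_trace B, Matrix.trace_fin_two, Algebra.leftMulMatrix_eq_repr_mul,
      Algebra.leftMulMatrix_eq_repr_mul, hB, mul_one, ← hω, one_mul, r00, r11]; norm_num
  have htr2 : Algebra.trace ℤ (𝓞 K) (ω * ω) = a ^ 2 - 2 * b := by
    have : ω * ω = a • ω - b • (1 : 𝓞 K) := by rw [hsq]; simp [zsmul_eq_mul]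
    rw [this, map_sub, map_smul, map_smul, htr, htr1]; simp; ring
  have hdisc : discr K = a ^ 2 - 4 * b := by
    rw [← discr_eq_discr K B, Algebra.discr_def, Matrix.det_fin_two]
    simp only [Algebra.traceMatrix_apply, Algebra.traceForm_apply, hB, ← hω, mul_one, one_mul, htr,
      htr1, htr2]
    ring
  obtain ⟨c, hc⟩ : ∃ c : ℤ, discr K = a + 2 * c := by
    have : (2 : ℤ) ∣ a ^ 2 - a := by
      have := Int.even_mul_pred_self a
      rw [show a ^ 2 - a = a * (a - 1) by ring]; exact this.two_dvd
    obtain ⟨e, he⟩ := this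
    exact ⟨e - 2 * b, by rw [hdisc]; linarith⟩
  have hσ : ∃ σ : 𝓞 K →+* ℂ, 2 * σ ω - a = Complex.I * (Real.sqrt (-(discr K : ℝ)) : ℂ) := by
    obtain ⟨σ⟩ : Nonempty (K →+* ℂ) := inferInstance
    have e1 : ((Real.sqrt (-(discr K : ℝ)) : ℝ) : ℂ) ^ 2 = -(discr K : ℂ) := by
      rw [← Complex.ofReal_pow, Real.sq_sqrt hdR.le]; push_cast; rfl
    have hdC : (discr K : ℂ) = a ^ 2 - 4 * b := by rw [hdisc]; push_cast; ring
    set τ : 𝓞 K →+* ℂ := σ.comp (algebraMap (𝓞 K) K) with hτ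
    have e2 : τ ω * τ ω = a * τ ω - b := by
      rw [← map_mul, hsq]; simp
    have e3 : (2 * τ ω - a) ^ 2 = (Complex.I * (Real.sqrt (-(discr K : ℝ)) : ℂ)) ^ 2 := by
      rw [mul_pow, e1, Complex.I_sq, hdC]; linear_combination 4 * e2
    rcases sq_eq_sq_iff_eq_or_eq_neg.mp e3 with h | h
    · exact ⟨τ, h⟩
    · refine ⟨(starRingEnd ℂ).comp τ, ?_⟩
      have := congrArg (starRingEnd ℂ) h
      simp only [map_sub, map_mul, map_neg, Complex.conj_I, Complex.conj_ofReal] at this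
      rw [Complex.conj_ofNat] at this
      simpa using this
  obtain ⟨σ, hσ⟩ := hσ
  refine ⟨ω + c, a + 2 * c, c ^ 2 + a * c + b, σ, ?_, ?_, ?_⟩
  · push_cast; linear_combination hsq
  · have : (discr K : ℂ) = a + 2 * c := by rw [hc]; push_cast; ring
    rw [map_add, map_intCast, hθ, this]
    linear_combination hσ / 2
  · intro α
    refine ⟨B.repr α 0 - B.repr α 1 * c, B.repr α 1, ?_⟩
    push_cast
    linear_combination hspan α

theorem main (K : Type*) [Field K] [NumberField K]
    (hdeg : Module.finrank ℚ K = 2) (hreal : IsEmpty (K →+* ℝ))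
    {N : ℕ} (hN : 2 ≤ N)
    (hNnotprimepow : ¬ ∃ (P : Ideal (𝓞 K)) (k : ℕ), P.IsPrime ∧
      Ideal.span {(N : 𝓞 K)} = P ^ k)
    {u : ℤ} (hu : Int.gcd u N = 1) {θ : ℂ}
    (hθ : θ = ((discr K : ℂ) + Complex.I * (Real.sqrt (-(discr K : ℝ)) : ℂ)) / 2) :
    G 0 ((u : ℚ) / (N : ℚ)) θ ^ N ∈ R ∧ (G 0 ((u : ℚ) / (N : ℚ)) θ ^ N)⁻¹ ∈ R := by
  obtain ⟨hH, ϑ, t, m, σ, hϑ, hσ, hspan⟩ := exists_theta K hdeg hreal hθ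
  have hN0 : (N : ℚ) ≠ 0 := by positivity
  have hN1 : 0 < N := by omega
  set s : ℚ := (u : ℚ) / (N : ℚ) with hs
  have hsN : (N : ℚ) * s = u := by rw [hs]; field_simp
  have hθ2 : θ ^ 2 = t * θ - m := by
    rw [← hσ, ← map_pow, hϑ]; simp
  have hcop : IsCoprime u (N : ℤ) := Int.isCoprime_iff_gcd_eq_one.mpr hu
  have hIm : ∀ {X Y : ℤ}, (X : ℂ) + Y * θ = 0 → X = 0 ∧ Y = 0 := by
    intro X Y h
    have h1 := congrArg Complex.im h
    have hY : Y = 0 := by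
      have : (Y : ℝ) * θ.im = 0 := by simpa using h1
      rcases mul_eq_zero.mp this with h | h
      · exact_mod_cast h
      · exact absurd h (ne_of_gt hH)
    subst hY
    exact ⟨by simpa using h, rfl⟩
  -- `N` divides no product `u α` unless it divides `α`, since `u` is prime to `N`
  have hdvd : ∀ {α : 𝓞 K}, (N : 𝓞 K) ∣ u * α → (N : 𝓞 K) ∣ α := by
    intro α h
    have : IsCoprime (N : 𝓞 K) (u : 𝓞 K) := by
      simpa using (hcop.symm.map (Int.castRingHom (𝓞 K)))
    exact this.dvd_of_dvd_mul_left h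
  have hnI : ¬ Int2 0 s := by
    rintro ⟨_, n, -, hn⟩
    rw [hn] at hsN
    have : (N : ℤ) * n = u := by exact_mod_cast hsN
    have h1 : (N : ℤ) ∣ 1 := by
      exact hcop.symm.dvd_of_dvd_mul_left ⟨n, by linarith⟩
    have := Int.le_of_dvd one_pos h1
    omega
  have hdiv : ∀ {α β : 𝓞 K}, (N : 𝓞 K) ∣ α * β → ¬ (N : 𝓞 K) ∣ α → ¬ (N : 𝓞 K) ∣ β →
      σ β ^ (12 * N) / G 0 s θ ^ N ∈ R := by
    intro α β hab ha hb
    obtain ⟨x, y, rfl⟩ := hspan α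
    obtain ⟨z, w, rfl⟩ := hspan β
    have := unit_div hH hθ2 hN1 (s := s) ⟨u, hsN⟩ (x := x) (y := y) (z := z) (w := w)
      (by rintro ⟨rfl, rfl⟩; simp at ha) (by rintro ⟨rfl, rfl⟩; simp at hb) ?_ ?_
    · simpa [hσ] using this
    · rintro ⟨p, q, hp, hq⟩
      refine ha (hdvd ⟨p + q * ϑ, ?_⟩)
      have h1 : u * x = N * p := by
        have : (u : ℚ) * x = N * p := by rw [← hp, ← hsN]; ring
        exact_mod_cast this
      have h2 : u * y = N * q := by
        have : (u : ℚ) * y = N * q := by rw [← hq, ← hsN]; ring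
        exact_mod_cast this
      have h1' : (u : 𝓞 K) * x = N * p := by exact_mod_cast congrArg (Int.cast : ℤ → 𝓞 K) h1
      have h2' : (u : 𝓞 K) * y = N * q := by exact_mod_cast congrArg (Int.cast : ℤ → 𝓞 K) h2
      linear_combination h1' + h2' * ϑ
    · obtain ⟨γ, hγ⟩ := hab
      obtain ⟨p, q, rfl⟩ := hspan γ
      have e := congrArg σ hγ
      simp only [map_mul, map_add, map_intCast, map_natCast, hσ] at e
      obtain ⟨e1, e2⟩ := hIm (X := x * z - m * y * w - N * p)
        (Y := x * w + y * z + t * y * w - N * q) (by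
          push_cast; linear_combination e - y * w * hθ2)
      refine ⟨u * p, u * q, ?_, ?_⟩
      · rw [show x * z - m * y * w = N * p by linarith, ← sub_eq_zero]
        push_cast; linear_combination p * hsN
      · rw [show x * w + y * z + t * y * w = N * q by linarith, ← sub_eq_zero]
        push_cast; linear_combination q * hsN
  refine ⟨G_integral hN1 ⟨0, by simp⟩ ⟨u, hsN⟩ hnI hH (jj_cm hH hθ2), ?_⟩
  obtain ⟨α, β, hc, hab, ha, hb⟩ := exists_coprime_split (n := (N : 𝓞 K))
    (by exact_mod_cast hN1.ne') hNnotprimepow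
  obtain ⟨X, Y, hXY⟩ := hc.pow (m := 12 * N) (n := 12 * N)
  have hint : ∀ γ : 𝓞 K, σ γ ∈ R := fun γ => by
    have := map_isIntegral_int σ (RingOfIntegers.isIntegral γ)
    exact this
  have e := congrArg σ hXY
  simp only [map_add, map_mul, map_pow, map_one] at e
  have e' : (G 0 s θ ^ N)⁻¹ = σ X * (σ α ^ (12 * N) / G 0 s θ ^ N) +
      σ Y * (σ β ^ (12 * N) / G 0 s θ ^ N) := by
    rw [← one_mul (G 0 s θ ^ N)⁻¹, ← e]; ring
  rw [e']
  exact add_mem (mul_mem (hint _) (hdiv (by rwa [mul_comm]) hb ha))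
    (mul_mem (hint _) (hdiv hab ha hb))

end SR

open NumberField in
theorem siegel_ramachandra_value_is_unit
    (K : Type*) [Field K] [NumberField K]
    (hdeg : Module.finrank ℚ K = 2) (hreal : IsEmpty (K →+* ℝ))
    (hK1 : discr K ≠ -4) (hK3 : discr K ≠ -3)
    (N : ℕ) (hN : 2 ≤ N)
    (hNnotprimepow : ¬ ∃ (P : Ideal (𝓞 K)) (k : ℕ), P.IsPrime ∧
      Ideal.span {(N : 𝓞 K)} = P ^ k)
    (u : ℤ) (hu : Int.gcd u N = 1)
    (θK : ℂ)
    (hθK : θK = ((discr K : ℂ) + Complex.I * (Real.sqrt (-(discr K : ℝ)) : ℂ)) / 2) :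
    IsIntegral ℤ (siegel 0 ((u : ℚ) / (N : ℚ)) θK ^ (12 * N)) ∧
      IsIntegral ℤ ((siegel 0 ((u : ℚ) / (N : ℚ)) θK ^ (12 * N))⁻¹) := by
  rw [pow_mul, SR.siegel_pow (SR.exists_theta K hdeg hreal hθK).1]
  exact SR.main K hdeg hreal hN hNnotprimepow hu hθK
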